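/- arXiv:2002.02766 — 2 statements merged into one kernel-verified Lean document; each statement's English description precedes it below -/
import Mathlib

section
/- A priori L² estimate for the ε-Milne problem with geometric correction (Theorem 'Milne LT Theorem'): There exist ε₀ ∈ (0,1) and C > 0, depending only on R₁, R₂, n, K and M, such that for every ε ∈ (0, ε₀] and every classical solution f of the ε-Milne problem with geometric correction whose data h, S satisfy the data bounds, one has |f_L| ≤ C and ‖f − f_L‖_{L²} ≤ C. -/
noncomputable section

open Real Set MeasureTheory

namespace MilneStmt

/-- The boundary-layer thickness `L = ε^(-n)`. -/
def layerL (ε n : ℝ) : ℝ := ε ^ (-n)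

/-- The geometric force `F(η,ψ)`. -/
def force (R₁ R₂ ε η ψ : ℝ) : ℝ :=
  -ε * (Real.sin ψ ^ 2 / (R₁ - ε * η) + Real.cos ψ ^ 2 / (R₂ - ε * η))

/-- The domain `D = [0,L] × [-π/2, π/2] × [-π, π]` of the variables `(η, φ, ψ)`. -/
def milneDomain (L : ℝ) : Set (ℝ × ℝ × ℝ) :=
  Icc (0 : ℝ) L ×ˢ Icc (-(π / 2)) (π / 2) ×ˢ Icc (-π) π

/-- The in-flow set `{(φ,ψ) : sin φ > 0, ψ ∈ [-π,π]}` (with `φ` in the velocity range). -/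
def inflowSet : Set (ℝ × ℝ) :=
  {q | 0 < Real.sin q.1 ∧ q.1 ∈ Icc (-(π / 2)) (π / 2) ∧ q.2 ∈ Icc (-π) π}

/-- The angular average `f̄(η)`. -/
def angAvg (f : ℝ × ℝ × ℝ → ℝ) (η : ℝ) : ℝ :=
  (1 / (4 * π)) * ∫ ψ in (-π)..π, ∫ φ in (-(π / 2))..(π / 2), f (η, φ, ψ) * Real.cos φ

/-- Partial derivative in `η`. -/
def dEta (g : ℝ × ℝ × ℝ → ℝ) (p : ℝ × ℝ × ℝ) : ℝ :=
  deriv (fun t => g (t, p.2.1, p.2.2)) p.1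

/-- Partial derivative in `φ`. -/
def dPhi (g : ℝ × ℝ × ℝ → ℝ) (p : ℝ × ℝ × ℝ) : ℝ :=
  deriv (fun t => g (p.1, t, p.2.2)) p.2.1

/-- Partial derivative in `ψ`. -/
def dPsi (g : ℝ × ℝ × ℝ → ℝ) (p : ℝ × ℝ × ℝ) : ℝ :=
  deriv (fun t => g (p.1, p.2.1, t)) p.2.2

/-- A classical solution of the ε-Milne problem with geometric correction,
with in-flow data `h` and source `S`. -/
structure IsMilneSolution (R₁ R₂ ε n : ℝ) (h : ℝ → ℝ → ℝ) (S : ℝ × ℝ × ℝ → ℝ)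
    (f : ℝ × ℝ × ℝ → ℝ) : Prop where
  smooth : ContDiffOn ℝ 1 f (milneDomain (layerL ε n))
  eqn : ∀ p ∈ interior (milneDomain (layerL ε n)),
    Real.sin p.2.1 * dEta f p + force R₁ R₂ ε p.1 p.2.2 * Real.cos p.2.1 * dPhi f p
      + f p - angAvg f p.1 = S p
  inflow : ∀ q ∈ inflowSet, f (0, q.1, q.2) = h q.1 q.2
  reflect : ∀ φ ψ : ℝ, f (layerL ε n, φ, ψ) = f (layerL ε n, -φ, ψ)

/-- The weighted `L²` norm on `D`. -/
def l2Norm (L : ℝ) (g : ℝ × ℝ × ℝ → ℝ) : ℝ :=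
  Real.sqrt (∫ η in (0 : ℝ)..L, ∫ ψ in (-π)..π, ∫ φ in (-(π / 2))..(π / 2),
    g (η, φ, ψ) ^ 2 * Real.cos φ)

/-- The `L^∞` norm (sup over `D`). -/
def linfNorm (L : ℝ) (g : ℝ × ℝ × ℝ → ℝ) : ℝ :=
  ⨆ p ∈ milneDomain L, |g p|

/-- The `L^∞` norm over the in-flow boundary. -/
def inflowLinf (g : ℝ → ℝ → ℝ) : ℝ :=
  ⨆ q ∈ inflowSet, |g q.1 q.2|

/-- The limit value `f_L = (3/(4π)) ∫∫ f(L,φ,ψ) sin²φ cos φ dφ dψ`. -/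
def limitValue (L : ℝ) (f : ℝ × ℝ × ℝ → ℝ) : ℝ :=
  (3 / (4 * π)) * ∫ ψ in (-π)..π, ∫ φ in (-(π / 2))..(π / 2),
    f (L, φ, ψ) * Real.sin φ ^ 2 * Real.cos φ

/-- The data bounds with constants `K` and `M` for in-flow data `h` and source `S`. -/
structure DataBounds (K M L : ℝ) (h : ℝ → ℝ → ℝ) (S : ℝ × ℝ × ℝ → ℝ) : Prop where
  hSmooth : ContDiffOn ℝ 1 (fun q : ℝ × ℝ => h q.1 q.2) inflowSet
  hBound : ∀ q ∈ inflowSet,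
    |h q.1 q.2| + |deriv (fun t => h t q.2) q.1| + |deriv (fun t => h q.1 t) q.2| ≤ M
  sSmooth : ContDiffOn ℝ 1 S (milneDomain L)
  sBound : ∀ p ∈ milneDomain L,
    Real.exp (K * p.1) * (|S p| + |dEta S p| + |dPhi S p| + |dPsi S p|) ≤ M

/-!
Write `σ` for the uniform probability measure on the sphere of velocities and `δ` for a bound on the
force; `δ` is of order `ε`, so `δ (1 + L)²` is of order `ε + ε^(1 - 2n)` and tends to `0` with `ε`.
Integrating the equation over the sphere against `1`, `sin φ` and `f` gives balance laws in `η`.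

* Weight `1`: specular reflection makes the flux `∫ f sin φ dσ` vanish at `η = L`, so at every depth
  it is controlled by the source and the force.
* Weight `sin φ`: the pressure `3 ∫ f sin² φ dσ` varies only through the flux, the source and the
  force. Its value at `η = L` is `f_L`, and it differs from the mean `f̄` by at most twice the mean
  deviation of `f` from `f̄`.
* Weight `f`: the variance of `f` about `f̄`, integrated over the slab, plus half of the outgoing
  energy at `η = 0` equals half of the incoming energy plus source and force terms.

The force enters each law only through `f - f̄`, because its weights have mean zero over the sphere;
by Cauchy–Schwarz its contribution is at most a small multiple of the dissipation and is absorbed.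
-/

section General

lemma exists_continuous_eqOn_of_isClosed {X : Type*} [TopologicalSpace X] [NormalSpace X]
    {s : Set X} {g : X → ℝ} (hs : IsClosed s) (hg : ContinuousOn g s) :
    ∃ G : X → ℝ, Continuous G ∧ EqOn G g s := by
  obtain ⟨G, hG⟩ := ContinuousMap.exists_restrict_eq hs ⟨s.domRestrict g, hg.domRestrict⟩
  exact ⟨G, G.continuous, fun x hx => DFunLike.congr_fun hG ⟨x, hx⟩⟩

lemma sq_integral_le_measureReal_univ_mul_integral_sq {X : Type*} [MeasurableSpace X]
    {μ : Measure X} [IsFiniteMeasure μ] {g : X → ℝ} (hg : Integrable g μ)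
    (hg2 : Integrable (fun x => g x ^ 2) μ) :
    (∫ x, g x ∂μ) ^ 2 ≤ μ.real univ * ∫ x, g x ^ 2 ∂μ := by
  rcases eq_or_ne μ 0 with rfl | hμ
  · simp
  have : NeZero μ := ⟨hμ⟩
  have jensen := even_two.convexOn_pow.map_average_le (by fun_prop) isClosed_univ
    (Filter.Eventually.of_forall fun x => mem_univ (g x)) hg hg2
  have mass_pos : 0 < μ.real univ := measureReal_univ_pos
  rw [average_eq, average_eq, smul_eq_mul, smul_eq_mul, inv_mul_eq_div, inv_mul_eq_div, div_pow,
    div_le_div_iff₀ (by positivity) mass_pos] at jensen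
  nlinarith

lemma add_add_sq_le_three_mul {R : Type*} [CommRing R] [LinearOrder R] [IsStrictOrderedRing R]
    (a b c : R) : (a + b + c) ^ 2 ≤ 3 * (a ^ 2 + b ^ 2 + c ^ 2) := by
  linarith [sq_nonneg (a - b), sq_nonneg (b - c), sq_nonneg (a - c)]

lemma integral_exp_neg_mul_le {K : ℝ} (hK : 0 < K) (a b : ℝ) :
    ∫ s in a..b, exp (-(K * s)) ≤ exp (-(K * a)) / K := by
  have primitive : ∀ s ∈ uIcc a b,
      HasDerivAt (fun s => -exp (-(K * s)) / K) (exp (-(K * s))) s := by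
    intro s _
    have h := ((hasDerivAt_const_mul K).fun_neg.exp.fun_neg).div_const K (x := s)
    rwa [mul_neg, neg_neg, mul_div_cancel_right₀ _ hK.ne'] at h
  rw [intervalIntegral.integral_eq_sub_of_hasDerivAt primitive
    (Continuous.intervalIntegrable (by fun_prop) _ _)]
  have : 0 < exp (-(K * b)) / K := by positivity
  linarith [neg_div K (exp (-(K * a))), neg_div K (exp (-(K * b)))]

lemma integral2_divergence_prod_of_forall_exists_hasFDerivAt {E : Type*} [NormedAddCommGroup E]
    [NormedSpace ℝ E] {a₁ b₁ a₂ b₂ : ℝ} (h₁ : a₁ ≤ b₁) (h₂ : a₂ ≤ b₂) {f g D : ℝ × ℝ → E}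
    (hf : Continuous f) (hg : Continuous g) (hD : Continuous D)
    (hdiv : ∀ x ∈ Ioo a₁ b₁ ×ˢ Ioo a₂ b₂, ∃ f' g' : ℝ × ℝ →L[ℝ] E,
      HasFDerivAt f f' x ∧ HasFDerivAt g g' x ∧ f' (1, 0) + g' (0, 1) = D x) :
    ∫ x in a₁..b₁, ∫ y in a₂..b₂, D (x, y) =
      (((∫ x in a₁..b₁, g (x, b₂)) - ∫ x in a₁..b₁, g (x, a₂)) + ∫ y in a₂..b₂, f (b₁, y)) -
        ∫ y in a₂..b₂, f (a₁, y) := by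
  set U := Ioo a₁ b₁ ×ˢ Ioo a₂ b₂
  -- Off `U` the derivatives are replaced by arbitrary maps with divergence `D`.
  have hdiv' : ∀ x, ∃ f' g' : ℝ × ℝ →L[ℝ] E, (x ∈ U → HasFDerivAt f f' x) ∧
      (x ∈ U → HasFDerivAt g g' x) ∧ f' (1, 0) + g' (0, 1) = D x := by
    intro x
    by_cases hx : x ∈ U
    · obtain ⟨f', g', hf', hg', h⟩ := hdiv x hx
      exact ⟨f', g', fun _ => hf', fun _ => hg', h⟩
    · exact ⟨(ContinuousLinearMap.fst ℝ ℝ ℝ).smulRight (D x), 0, fun h => absurd h hx,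
        fun h => absurd h hx, by simp⟩
  choose f' g' hf' hg' hD' using hdiv'
  have rectangle : Ioo (min a₁ b₁) (max a₁ b₁) ×ˢ Ioo (min a₂ b₂) (max a₂ b₂) = U := by
    rw [min_eq_left h₁, max_eq_right h₁, min_eq_left h₂, max_eq_right h₂]
  have h := integral2_divergence_prod_of_hasFDerivAt f g f' g' a₁ a₂ b₁ b₂ hf.continuousOn
    hg.continuousOn (by rwa [rectangle]) (by rwa [rectangle])
    (by simpa only [hD'] using
      hD.continuousOn.integrableOn_compact (isCompact_uIcc.prod isCompact_uIcc))
  simpa only [hD'] using h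

end General

section Sphere

/-- The closed coordinate box `[-π/2, π/2] × [-π, π]` of the velocity angles `(φ, ψ)`. -/
def angularBox : Set (ℝ × ℝ) := Icc (-(π / 2)) (π / 2) ×ˢ Icc (-π) π

/-- The uniform probability measure on the unit sphere of velocities, in the coordinates `(φ, ψ)`.
Normalising it makes `angAvg` a plain integral and removes the factors `4π` from the estimates. -/
def sphereMeasure : Measure (ℝ × ℝ) :=
  (volume.restrict angularBox).withDensity fun v => ENNReal.ofReal (cos v.1 / (4 * π))

lemma isCompact_angularBox : IsCompact angularBox := isCompact_Icc.prod isCompact_Icc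

lemma cos_nonneg_of_mem_angularBox {v : ℝ × ℝ} (hv : v ∈ angularBox) : 0 ≤ cos v.1 :=
  cos_nonneg_of_mem_Icc hv.1

lemma ae_mem_angularBox : ∀ᵐ v ∂sphereMeasure, v ∈ angularBox :=
  (withDensity_absolutelyContinuous _ _).ae_le
    (ae_restrict_mem isCompact_angularBox.measurableSet)

lemma integral_sphereMeasure {g : ℝ × ℝ → ℝ} (hg : ContinuousOn g angularBox) :
    ∫ v, g v ∂sphereMeasure =
      1 / (4 * π) * ∫ ψ in (-π)..π, ∫ φ in (-(π / 2))..(π / 2), g (φ, ψ) * cos φ := by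
  have density_nonneg : ∀ v ∈ angularBox, 0 ≤ cos v.1 / (4 * π) := fun v hv =>
    div_nonneg (cos_nonneg_of_mem_angularBox hv) (by positivity)
  rw [sphereMeasure, integral_withDensity_eq_integral_toReal_smul (by fun_prop)
    (Filter.Eventually.of_forall fun _ => ENNReal.ofReal_lt_top)]
  calc ∫ v in angularBox, (ENNReal.ofReal (cos v.1 / (4 * π))).toReal • g v
      = ∫ v in angularBox, 1 / (4 * π) * (g v * cos v.1) := by
        refine setIntegral_congr_fun isCompact_angularBox.measurableSet fun v hv => ?_
        simp only [ENNReal.toReal_ofReal (density_nonneg v hv), smul_eq_mul]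
        ring
    _ = 1 / (4 * π) * ∫ z in Icc (-π) π ×ˢ Icc (-(π / 2)) (π / 2), g z.swap * cos z.2 := by
        rw [integral_const_mul, Measure.volume_eq_prod, ← setIntegral_prod_swap]
        rfl
    _ = _ := by
        have integrand : ContinuousOn (fun z : ℝ × ℝ => g z.swap * cos z.2)
            (Icc (-π) π ×ˢ Icc (-(π / 2)) (π / 2)) :=
          (hg.comp continuous_swap.continuousOn fun z hz => hz.symm).mul (by fun_prop)
        rw [Measure.volume_eq_prod, setIntegral_prod _
            (integrand.integrableOn_compact (isCompact_Icc.prod isCompact_Icc)),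
          integral_Icc_eq_integral_Ioc, ← intervalIntegral.integral_of_le (by linarith [pi_pos])]
        simp only [integral_Icc_eq_integral_Ioc, Prod.swap_prod_mk,
          ← intervalIntegral.integral_of_le (show -(π / 2) ≤ π / 2 by linarith [pi_pos])]

instance : IsProbabilityMeasure sphereMeasure := by
  rw [isProbabilityMeasure_iff_real]
  calc sphereMeasure.real univ = ∫ _, 1 ∂sphereMeasure := by simp
    _ = 1 / (4 * π) * (2 * π * 2) := by
        rw [integral_sphereMeasure continuousOn_const]
        norm_num [two_mul]
    _ = 1 := by field

lemma integrable_sphereMeasure {g : ℝ × ℝ → ℝ} (hg : Continuous g) :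
    Integrable g sphereMeasure := by
  rw [← Measure.restrict_eq_self_of_ae_mem ae_mem_angularBox]
  exact hg.continuousOn.integrableOn_compact isCompact_angularBox

lemma continuous_integral_sphereMeasure {X : Type*} [TopologicalSpace X]
    [FirstCountableTopology X] [LocallyCompactSpace X] {g : X → ℝ × ℝ → ℝ}
    (hg : Continuous g.uncurry) : Continuous fun x => ∫ v, g x v ∂sphereMeasure := by
  rw [← Measure.restrict_eq_self_of_ae_mem ae_mem_angularBox]
  exact continuous_parametric_integral_of_continuous hg isCompact_angularBox

lemma integral_sphereMeasure_mono {g k : ℝ × ℝ → ℝ} (hg : Continuous g) (hk : Continuous k)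
    (h : ∀ v ∈ angularBox, g v ≤ k v) : ∫ v, g v ∂sphereMeasure ≤ ∫ v, k v ∂sphereMeasure :=
  integral_mono_ae (integrable_sphereMeasure hg) (integrable_sphereMeasure hk)
    (ae_mem_angularBox.mono h)

lemma abs_integral_sphereMeasure_le {g k : ℝ × ℝ → ℝ} (hk : Continuous k)
    (h : ∀ v ∈ angularBox, |g v| ≤ k v) :
    |∫ v, g v ∂sphereMeasure| ≤ ∫ v, k v ∂sphereMeasure :=
  norm_integral_le_of_norm_le (integrable_sphereMeasure hk)
    (ae_mem_angularBox.mono fun v hv => (norm_eq_abs (g v)).trans_le (h v hv))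

lemma integral_sphereMeasure_congr {g k : ℝ × ℝ → ℝ} (h : EqOn g k angularBox) :
    ∫ v, g v ∂sphereMeasure = ∫ v, k v ∂sphereMeasure :=
  integral_congr_ae (ae_mem_angularBox.mono h)

lemma integral_sphereMeasure_eq_zero_of_odd {g : ℝ × ℝ → ℝ} (hg : Continuous g)
    (hodd : ∀ v ∈ angularBox, g (-v.1, v.2) = -g v) : ∫ v, g v ∂sphereMeasure = 0 := by
  have reflection : ∫ v, g v ∂sphereMeasure = ∫ v, g (-v.1, v.2) ∂sphereMeasure := by
    rw [integral_sphereMeasure hg.continuousOn, integral_sphereMeasure (by fun_prop)]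
    congr with ψ
    have h := intervalIntegral.integral_comp_neg (a := -(π / 2)) (b := π / 2)
      fun φ => g (φ, ψ) * cos φ
    simpa only [cos_neg, neg_neg] using h.symm
  have := integral_sphereMeasure_congr hodd
  rw [integral_neg] at this
  linarith

lemma integral_mul_weight_sub_const {a w : ℝ → ℝ} {g : ℝ × ℝ → ℝ} (ha : Continuous a)
    (hw : Continuous w) (hg : Continuous g) (c : ℝ)
    (hw0 : ∫ φ in (-(π / 2))..(π / 2), w φ * cos φ = 0) :
    ∫ v, a v.2 * (g v - c) * w v.1 ∂sphereMeasure = ∫ v, a v.2 * g v * w v.1 ∂sphereMeasure := by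
  have isotropic : ∫ v, c * a v.2 * w v.1 ∂sphereMeasure = 0 := by
    rw [integral_sphereMeasure (by fun_prop)]
    simp [mul_assoc, hw0]
  rw [← sub_zero (∫ v, a v.2 * g v * w v.1 ∂sphereMeasure), ← isotropic,
    ← integral_sub (integrable_sphereMeasure (by fun_prop))
      (integrable_sphereMeasure (by fun_prop))]
  congr with v
  ring

lemma abs_integral_mul_weight_le {a w : ℝ → ℝ} {g : ℝ × ℝ → ℝ} (ha : Continuous a)
    (hw : Continuous w) (hg : Continuous g) (c : ℝ)
    (hw0 : ∫ φ in (-(π / 2))..(π / 2), w φ * cos φ = 0) {δ B : ℝ}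
    (haδ : ∀ ψ ∈ Icc (-π) π, |a ψ| ≤ δ) (hwB : ∀ φ, |w φ| ≤ B) :
    |∫ v, a v.2 * g v * w v.1 ∂sphereMeasure| ≤ δ * B * ∫ v, |g v - c| ∂sphereMeasure := by
  rw [← integral_mul_weight_sub_const ha hw hg c hw0, ← integral_const_mul]
  refine abs_integral_sphereMeasure_le (by fun_prop) fun v hv => ?_
  have hδ := haδ v.2 hv.2
  have hB := hwB v.1
  calc |a v.2 * (g v - c) * w v.1| = |a v.2| * |g v - c| * |w v.1| := by rw [abs_mul, abs_mul]
    _ ≤ δ * |g v - c| * B := by gcongr; exact mul_nonneg ((abs_nonneg _).trans hδ) (abs_nonneg _)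
    _ = δ * B * |g v - c| := by ring

lemma integral_sin_mul_cos_eq_zero : ∫ φ in (-(π / 2))..(π / 2), sin φ * cos φ = 0 := by
  simp [integral_sin_mul_cos₁]

lemma integral_one_sub_three_mul_sin_sq_mul_cos_eq_zero :
    ∫ φ in (-(π / 2))..(π / 2), (1 - 3 * sin φ ^ 2) * cos φ = 0 := by
  have primitive : ∀ φ ∈ uIcc (-(π / 2)) (π / 2),
      HasDerivAt (fun φ => sin φ - sin φ ^ 3) ((1 - 3 * sin φ ^ 2) * cos φ) φ := by
    intro φ _
    refine ((hasDerivAt_sin φ).sub ((hasDerivAt_sin φ).pow 3)).congr_deriv ?_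
    norm_num
    ring
  rw [intervalIntegral.integral_eq_sub_of_hasDerivAt primitive
    (Continuous.intervalIntegrable (by fun_prop) _ _)]
  norm_num [sin_neg]

lemma abs_one_sub_three_mul_sin_sq_le (φ : ℝ) : |1 - 3 * sin φ ^ 2| ≤ 2 := by
  rw [abs_le]
  constructor <;> linarith [sin_sq_le_one φ, sq_nonneg (sin φ)]

end Sphere

section Transport

/-- `N` is the derivative of `G` along the transport field `sin φ ∂_η + F cos φ ∂_φ` in the open
slab of height `L`; the angle `ψ` is a parameter, so joint differentiability is asked for in
`(η, φ)` only. -/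
def IsTransportDeriv (L : ℝ) (F : ℝ × ℝ → ℝ) (G N : ℝ × ℝ × ℝ → ℝ) : Prop :=
  ∀ η ∈ Ioo 0 L, ∀ φ ∈ Ioo (-(π / 2)) (π / 2), ∀ ψ ∈ Ioo (-π) π,
    ∃ G' : ℝ × ℝ →L[ℝ] ℝ, HasFDerivAt (fun x : ℝ × ℝ => G (x.1, x.2, ψ)) G' (η, φ) ∧
      sin φ * G' (1, 0) + F (η, ψ) * cos φ * G' (0, 1) = N (η, φ, ψ)

lemma IsTransportDeriv.sq {L : ℝ} {F : ℝ × ℝ → ℝ} {G N : ℝ × ℝ × ℝ → ℝ}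
    (h : IsTransportDeriv L F G N) :
    IsTransportDeriv L F (fun p => G p ^ 2) (fun p => 2 * G p * N p) := by
  intro η hη φ hφ ψ hψ
  obtain ⟨G', hG', hN⟩ := h η hη φ hφ ψ hψ
  refine ⟨_, hG'.pow 2, ?_⟩
  simp only [← hN, smul_apply, smul_eq_mul, nsmul_eq_mul]
  push_cast
  ring

/-- The weight `cos φ` of the sphere kills the boundary terms at `φ = ±π/2`. -/
lemma integral_slice_transport {a b : ℝ} (hab : a ≤ b) {G N : ℝ × ℝ → ℝ} {F w w' : ℝ → ℝ}
    (hG : Continuous G) (hN : Continuous N) (hF : Continuous F)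
    (hw : ∀ φ, HasDerivAt w (w' φ) φ) (hw' : Continuous w')
    (hFd : ∀ η ∈ Ioo a b, DifferentiableAt ℝ F η)
    (htransport : ∀ η ∈ Ioo a b, ∀ φ ∈ Ioo (-(π / 2)) (π / 2), ∃ G' : ℝ × ℝ →L[ℝ] ℝ,
      HasFDerivAt G G' (η, φ) ∧ sin φ * G' (1, 0) + F η * cos φ * G' (0, 1) = N (η, φ)) :
    ∫ η in a..b, ∫ φ in (-(π / 2))..(π / 2), (N (η, φ) * w φ
        + F η * G (η, φ) * (cos φ * w' φ - 2 * sin φ * w φ)) * cos φ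
      = (∫ φ in (-(π / 2))..(π / 2), G (b, φ) * (w φ * sin φ) * cos φ)
        - ∫ φ in (-(π / 2))..(π / 2), G (a, φ) * (w φ * sin φ) * cos φ := by
  have cw : Continuous w := continuous_iff_continuousAt.2 fun φ => (hw φ).continuousAt
  have h := integral2_divergence_prod_of_forall_exists_hasFDerivAt hab
    (show -(π / 2) ≤ π / 2 by linarith [pi_pos])
    (f := fun x => G x * (w x.2 * sin x.2) * cos x.2)
    (g := fun x => F x.1 * (G x * (w x.2 * cos x.2 ^ 2)))
    (D := fun x => (N x * w x.2
      + F x.1 * G x * (cos x.2 * w' x.2 - 2 * sin x.2 * w x.2)) * cos x.2)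
    (by fun_prop) (by fun_prop) (by fun_prop) ?_
  · simpa using h
  · rintro ⟨η, φ⟩ ⟨hη, hφ⟩
    obtain ⟨G', hG', hN⟩ := htransport η hη φ hφ
    have hφ' : HasFDerivAt Prod.snd (ContinuousLinearMap.snd ℝ ℝ ℝ) (η, φ) := hasFDerivAt_snd
    have hη' : HasFDerivAt Prod.fst (ContinuousLinearMap.fst ℝ ℝ ℝ) (η, φ) := hasFDerivAt_fst
    have hF' := (hFd η hη).hasDerivAt.comp_hasFDerivAt (η, φ) hη'
    have hw' := (hw φ).comp_hasFDerivAt (η, φ) hφ'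
    have hsin := (hasDerivAt_sin φ).comp_hasFDerivAt (η, φ) hφ'
    have hcos := (hasDerivAt_cos φ).comp_hasFDerivAt (η, φ) hφ'
    refine ⟨_, _, (hG'.mul (hw'.mul hsin)).mul hcos, hF'.mul (hG'.mul (hw'.mul (hcos.pow 2))), ?_⟩
    simp [← hN]
    ring

lemma sphere_moment_sub_eq_integral {L a : ℝ} (ha : a ∈ Icc 0 L) {G N : ℝ × ℝ × ℝ → ℝ}
    {F : ℝ × ℝ → ℝ} {w w' : ℝ → ℝ} (hG : Continuous G) (hN : Continuous N) (hF : Continuous F)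
    (hw : ∀ φ, HasDerivAt w (w' φ) φ) (hw' : Continuous w')
    (hFd : ∀ η ∈ Ioo 0 L, ∀ ψ ∈ Ioo (-π) π, DifferentiableAt ℝ (fun t => F (t, ψ)) η)
    (htransport : IsTransportDeriv L F G N) :
    ∫ v, G (L, v) * (w v.1 * sin v.1) ∂sphereMeasure
        - ∫ v, G (a, v) * (w v.1 * sin v.1) ∂sphereMeasure
      = ∫ η in a..L, ∫ v, (N (η, v) * w v.1
        + F (η, v.2) * G (η, v) * (cos v.1 * w' v.1 - 2 * sin v.1 * w v.1)) ∂sphereMeasure := by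
  have cw : Continuous w := continuous_iff_continuousAt.2 fun φ => (hw φ).continuousAt
  have cφ : ∀ t, Continuous fun ψ => ∫ φ in (-(π / 2))..(π / 2),
      G (t, φ, ψ) * (w φ * sin φ) * cos φ := fun t =>
    intervalIntegral.continuous_parametric_intervalIntegral_of_continuous' (by fun_prop) _ _
  have crate : Continuous fun x : ℝ × ℝ => ∫ φ in (-(π / 2))..(π / 2), (N (x.2, φ, x.1) * w φ
      + F (x.2, x.1) * G (x.2, φ, x.1) * (cos φ * w' φ - 2 * sin φ * w φ)) * cos φ :=
    intervalIntegral.continuous_parametric_intervalIntegral_of_continuous' (by fun_prop) _ _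
  have moment : ∀ t, ∫ v, G (t, v) * (w v.1 * sin v.1) ∂sphereMeasure = _ := fun t =>
    integral_sphereMeasure (by fun_prop)
  have rate : ∀ t, ∫ v, (N (t, v) * w v.1 + F (t, v.2) * G (t, v) *
      (cos v.1 * w' v.1 - 2 * sin v.1 * w v.1)) ∂sphereMeasure = _ := fun t =>
    integral_sphereMeasure (by fun_prop)
  simp_rw [moment, rate]
  rw [intervalIntegral.integral_const_mul, ← mul_sub,
    ← intervalIntegral.integral_sub ((cφ L).intervalIntegrable _ _)
      ((cφ a).intervalIntegrable _ _), ← intervalIntegral_intervalIntegral_swap]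
  · congr 1
    refine intervalIntegral.integral_congr_Ioo_of_le (by linarith [pi_pos]) fun ψ hψ => ?_
    exact (integral_slice_transport ha.2 (G := fun x => G (x.1, x.2, ψ))
      (N := fun x => N (x.1, x.2, ψ)) (F := fun t => F (t, ψ)) (by fun_prop) (by fun_prop)
      (by fun_prop) hw hw' (fun η hη => hFd η (Ioo_subset_Ioo_left ha.1 hη) ψ hψ)
      fun η hη φ hφ => htransport η (Ioo_subset_Ioo_left ha.1 hη) φ hφ ψ hψ).symm
  · exact (crate.continuousOn.integrableOn_compact
      (isCompact_uIcc.prod isCompact_uIcc)).mono_set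
        (prod_mono uIoc_subset_uIcc uIoc_subset_uIcc)

end Transport

section SphereMoments

/-- The mean of `f(η, ·)` over the sphere of velocities, the paper's `f̄`. -/
def sphereMean (f : ℝ × ℝ × ℝ → ℝ) (η : ℝ) : ℝ := ∫ v, f (η, v) ∂sphereMeasure

/-- The variance of `f(η, ·)` over the sphere of velocities. -/
def sphereVariance (f : ℝ × ℝ × ℝ → ℝ) (η : ℝ) : ℝ :=
  ∫ v, (f (η, v) - sphereMean f η) ^ 2 ∂sphereMeasure

/-- The mean absolute deviation of `f(η, ·)` over the sphere of velocities. -/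
def sphereDeviation (f : ℝ × ℝ × ℝ → ℝ) (η : ℝ) : ℝ :=
  ∫ v, |f (η, v) - sphereMean f η| ∂sphereMeasure

/-- The first normal moment of `f(η, ·)`. -/
def flux (f : ℝ × ℝ × ℝ → ℝ) (η : ℝ) : ℝ := ∫ v, f (η, v) * sin v.1 ∂sphereMeasure

/-- The second normal moment of `f(η, ·)`, normalised to agree with the mean on isotropic `f`.
The limit value `f_L` is the pressure at `η = L`. -/
def pressure (f : ℝ × ℝ × ℝ → ℝ) (η : ℝ) : ℝ :=
  3 * ∫ v, f (η, v) * sin v.1 ^ 2 ∂sphereMeasure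

/-- The `L²` energy crossing the boundary `η = 0`. -/
def boundaryEnergy (f : ℝ × ℝ × ℝ → ℝ) : ℝ := ∫ v, f (0, v) ^ 2 * |sin v.1| ∂sphereMeasure

/-- The mean absolute deviation accumulated over a slab of height `L`. -/
def totalDeviation (L : ℝ) (f : ℝ × ℝ × ℝ → ℝ) : ℝ := ∫ η in 0..L, sphereDeviation f η

/-- The variance accumulated over a slab of height `L`, which is what the operator `f - f̄`
dissipates. -/
def dissipation (L : ℝ) (f : ℝ × ℝ × ℝ → ℝ) : ℝ := ∫ η in 0..L, sphereVariance f η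

variable {f : ℝ × ℝ × ℝ → ℝ}

@[fun_prop]
lemma continuous_sphereMean (hf : Continuous f) : Continuous (sphereMean f) :=
  continuous_integral_sphereMeasure hf

@[fun_prop]
lemma continuous_sphereVariance (hf : Continuous f) : Continuous (sphereVariance f) :=
  continuous_integral_sphereMeasure (by fun_prop)

@[fun_prop]
lemma continuous_sphereDeviation (hf : Continuous f) : Continuous (sphereDeviation f) :=
  continuous_integral_sphereMeasure (by fun_prop)

lemma sphereVariance_nonneg (f : ℝ × ℝ × ℝ → ℝ) (η : ℝ) : 0 ≤ sphereVariance f η :=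
  integral_nonneg fun _ => sq_nonneg _

lemma sphereDeviation_nonneg (f : ℝ × ℝ × ℝ → ℝ) (η : ℝ) : 0 ≤ sphereDeviation f η :=
  integral_nonneg fun _ => abs_nonneg _

lemma boundaryEnergy_nonneg (f : ℝ × ℝ × ℝ → ℝ) : 0 ≤ boundaryEnergy f :=
  integral_nonneg fun _ => by positivity

lemma integral_sub_sphereMean (hf : Continuous f) (η : ℝ) :
    ∫ v, (f (η, v) - sphereMean f η) ∂sphereMeasure = 0 := by
  rw [integral_sub (integrable_sphereMeasure (by fun_prop))
    (integrable_sphereMeasure (by fun_prop))]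
  simp [sphereMean]

lemma integral_sub_const_sq (hf : Continuous f) (η c : ℝ) :
    ∫ v, (f (η, v) - c) ^ 2 ∂sphereMeasure = sphereVariance f η + (sphereMean f η - c) ^ 2 := by
  have cross : ∫ v, 2 * (sphereMean f η - c) * (f (η, v) - sphereMean f η) ∂sphereMeasure = 0 := by
    rw [integral_const_mul, integral_sub_sphereMean hf, mul_zero]
  have const : ∫ _, (sphereMean f η - c) ^ 2 ∂sphereMeasure = (sphereMean f η - c) ^ 2 := by simp
  rw [← const, ← add_zero (sphereVariance f η), ← cross, sphereVariance,
    ← integral_add (integrable_sphereMeasure (by fun_prop))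
      (integrable_sphereMeasure (by fun_prop)),
    ← integral_add (integrable_sphereMeasure (by fun_prop))
      (integrable_sphereMeasure (by fun_prop))]
  congr with v
  ring

lemma integral_mul_eq_variance (hf : Continuous f) (η : ℝ) :
    ∫ v, f (η, v) * (f (η, v) - sphereMean f η) ∂sphereMeasure = sphereVariance f η := by
  have cross : ∫ v, sphereMean f η * (f (η, v) - sphereMean f η) ∂sphereMeasure = 0 := by
    rw [integral_const_mul, integral_sub_sphereMean hf, mul_zero]
  rw [← sub_zero (∫ v, f (η, v) * _ ∂sphereMeasure), ← cross, sphereVariance,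
    ← integral_sub (integrable_sphereMeasure (by fun_prop))
      (integrable_sphereMeasure (by fun_prop))]
  congr with v
  ring

lemma sphereDeviation_sq_le (hf : Continuous f) (η : ℝ) :
    sphereDeviation f η ^ 2 ≤ sphereVariance f η := by
  simpa only [sphereDeviation, sphereVariance, probReal_univ, one_mul, sq_abs] using
    sq_integral_le_measureReal_univ_mul_integral_sq (μ := sphereMeasure)
      (g := fun v => |f (η, v) - sphereMean f η|) (integrable_sphereMeasure (by fun_prop))
      (integrable_sphereMeasure (by fun_prop))

lemma totalDeviation_sq_le {L : ℝ} (hL : 0 ≤ L) (hf : Continuous f) :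
    totalDeviation L f ^ 2 ≤ L * dissipation L f := by
  have cm := continuous_sphereDeviation hf
  have cauchy := sq_integral_le_measureReal_univ_mul_integral_sq
    (μ := volume.restrict (Ioc 0 L)) cm.integrableOn_Ioc (cm.pow 2).integrableOn_Ioc
  rw [← intervalIntegral.integral_of_le hL, ← intervalIntegral.integral_of_le hL] at cauchy
  calc totalDeviation L f ^ 2 ≤ L * ∫ η in 0..L, sphereDeviation f η ^ 2 := by
        simpa [totalDeviation, hL] using cauchy
    _ ≤ L * dissipation L f := by
        refine mul_le_mul_of_nonneg_left (intervalIntegral.integral_mono hL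
          ((cm.pow 2).intervalIntegrable _ _)
          ((continuous_sphereVariance hf).intervalIntegrable _ _) fun η => ?_) hL
        exact sphereDeviation_sq_le hf η

lemma integral_abs_le_deviation_add_mean (hf : Continuous f) (η : ℝ) :
    ∫ v, |f (η, v)| ∂sphereMeasure ≤ sphereDeviation f η + |sphereMean f η| := by
  have const : ∫ _, |sphereMean f η| ∂sphereMeasure = |sphereMean f η| := by simp
  rw [← const, sphereDeviation, ← integral_add (integrable_sphereMeasure (by fun_prop))
    (integrable_sphereMeasure (by fun_prop))]
  refine integral_sphereMeasure_mono (by fun_prop) (by fun_prop) fun v _ => ?_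
  simpa using abs_add_le (f (η, v) - sphereMean f η) (sphereMean f η)

lemma integral_abs_sq_sub_mean_sq_le (hf : Continuous f) (η : ℝ) :
    ∫ v, |f (η, v) ^ 2 - sphereMean f η ^ 2| ∂sphereMeasure
      ≤ sphereVariance f η + 2 * |sphereMean f η| * sphereDeviation f η := by
  rw [sphereVariance, sphereDeviation, ← integral_const_mul,
    ← integral_add (integrable_sphereMeasure (by fun_prop))
      (integrable_sphereMeasure (by fun_prop))]
  refine integral_sphereMeasure_mono (by fun_prop) (by fun_prop) fun v _ => ?_
  set q := sphereMean f η
  calc |f (η, v) ^ 2 - q ^ 2| = |(f (η, v) - q) ^ 2 + 2 * q * (f (η, v) - q)| := by ring_nf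
    _ ≤ (f (η, v) - q) ^ 2 + 2 * |q| * |f (η, v) - q| :=
        (abs_add_le _ _).trans_eq (by rw [abs_mul, abs_mul, abs_two, abs_sq])

lemma abs_sphereMean_sub_pressure_le (hf : Continuous f) (η : ℝ) :
    |sphereMean f η - pressure f η| ≤ 2 * sphereDeviation f η := by
  have difference : sphereMean f η - pressure f η
      = ∫ v, 1 * f (η, v) * (1 - 3 * sin v.1 ^ 2) ∂sphereMeasure := by
    rw [sphereMean, pressure, ← integral_const_mul, ← integral_sub
      (integrable_sphereMeasure (by fun_prop)) (integrable_sphereMeasure (by fun_prop))]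
    congr with v
    ring
  have h := abs_integral_mul_weight_le (a := fun _ => 1) (w := fun φ => 1 - 3 * sin φ ^ 2)
    (g := fun v => f (η, v)) (δ := 1) (B := 2) (by fun_prop) (by fun_prop) (by fun_prop)
    (sphereMean f η) integral_one_sub_three_mul_sin_sq_mul_cos_eq_zero (by simp)
    abs_one_sub_three_mul_sin_sq_le
  rwa [one_mul, ← difference] at h

lemma sq_pressure_zero_le (hf : Continuous f) : pressure f 0 ^ 2 ≤ 9 * boundaryEnergy f := by
  have jensen := sq_integral_le_measureReal_univ_mul_integral_sq (μ := sphereMeasure)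
    (g := fun v => f (0, v) * sin v.1 ^ 2) (integrable_sphereMeasure (by fun_prop))
    (integrable_sphereMeasure (by fun_prop))
  have le_energy : ∫ v, (f (0, v) * sin v.1 ^ 2) ^ 2 ∂sphereMeasure ≤ boundaryEnergy f := by
    refine integral_sphereMeasure_mono (by fun_prop) (by fun_prop) fun v _ => ?_
    have : |sin v.1| ^ 4 ≤ |sin v.1| :=
      pow_le_of_le_one (abs_nonneg _) (abs_sin_le_one _) (by norm_num)
    calc (f (0, v) * sin v.1 ^ 2) ^ 2 = f (0, v) ^ 2 * |sin v.1| ^ 4 := by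
          rw [← sq_abs (sin v.1)]; ring
      _ ≤ f (0, v) ^ 2 * |sin v.1| := by gcongr
  rw [probReal_univ, one_mul] at jensen
  rw [pressure, mul_pow]
  linarith

end SphereMoments

section Slab

/-- A transport problem in a slab abstracting the Milne problem: the force is only known to be
small, the source to decay at rate `K`, and all data are continuous on the whole space. -/
structure IsSlabSolution (L δ K M : ℝ) (F : ℝ × ℝ → ℝ) (S f : ℝ × ℝ × ℝ → ℝ) : Prop where
  length_nonneg : 0 ≤ L
  rate_pos : 0 < K
  continuous_force : Continuous F
  continuous_source : Continuous S
  continuous_solution : Continuous f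
  abs_force_le : ∀ η ∈ Icc 0 L, ∀ ψ ∈ Icc (-π) π, |F (η, ψ)| ≤ δ
  abs_source_le : ∀ η ∈ Icc 0 L, ∀ v ∈ angularBox, |S (η, v)| ≤ M * exp (-(K * η))
  differentiableAt_force :
    ∀ η ∈ Ioo 0 L, ∀ ψ ∈ Ioo (-π) π, DifferentiableAt ℝ (fun t => F (t, ψ)) η
  transport : IsTransportDeriv L F f fun p => S p - (f p - sphereMean f p.1)
  abs_inflow_le : ∀ v ∈ angularBox, 0 < sin v.1 → |f (0, v)| ≤ M
  reflect : ∀ v ∈ angularBox, f (L, -v.1, v.2) = f (L, v)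

/-- The part of the variation of the pressure across the slab which is caused by the force. -/
def pressureDrift (L δ : ℝ) (f : ℝ × ℝ × ℝ → ℝ) : ℝ := 6 * δ * (1 + L) * totalDeviation L f

/-- The part of the variation of the pressure across the slab which is caused by the source. -/
def sourceDrift (K M : ℝ) : ℝ := 3 * (M / K + M / K ^ 2)

/-- The a priori bound on the boundary energy and on the dissipation. -/
def energyBound (K M : ℝ) : ℝ :=
  4 * (M ^ 2 + 9 * M ^ 2 / K) + 100 * (M / K + sourceDrift K M) ^ 2

namespace IsSlabSolution

variable {L δ K M : ℝ} {F : ℝ × ℝ → ℝ} {S f : ℝ × ℝ × ℝ → ℝ} (h : IsSlabSolution L δ K M F S f)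

include h

lemma force_bound_nonneg : 0 ≤ δ :=
  (abs_nonneg _).trans (h.abs_force_le 0 ⟨le_rfl, h.length_nonneg⟩ 0 (by simp [pi_pos.le]))

lemma data_bound_nonneg : 0 ≤ M := by
  have := (abs_nonneg _).trans
    (h.abs_source_le 0 ⟨le_rfl, h.length_nonneg⟩ (0, 0)
      (by simp [angularBox, pi_pos.le, pi_div_two_pos.le]))
  simpa using this

lemma sourceDrift_nonneg : 0 ≤ sourceDrift K M := by
  have := h.rate_pos
  have := h.data_bound_nonneg
  unfold sourceDrift
  positivity

lemma totalDeviation_nonneg : 0 ≤ totalDeviation L f :=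
  intervalIntegral.integral_nonneg h.length_nonneg fun _ _ => sphereDeviation_nonneg f _

lemma dissipation_nonneg : 0 ≤ dissipation L f :=
  intervalIntegral.integral_nonneg h.length_nonneg fun _ _ => sphereVariance_nonneg f _

lemma pressureDrift_nonneg : 0 ≤ pressureDrift L δ f := by
  have := h.length_nonneg
  have := h.force_bound_nonneg
  have := h.totalDeviation_nonneg
  unfold pressureDrift
  positivity

lemma integral_odd_at_top_eq_zero (k : ℕ) : ∫ v, f (L, v) ^ k * sin v.1 ∂sphereMeasure = 0 := by
  have := h.continuous_solution
  refine integral_sphereMeasure_eq_zero_of_odd (by fun_prop) fun v hv => ?_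
  rw [h.reflect v hv, sin_neg, mul_neg]

lemma flux_eq_neg_integral {η : ℝ} (hη : η ∈ Icc 0 L) :
    flux f η = -∫ s in η..L, (∫ v, S (s, v) ∂sphereMeasure
      - 2 * ∫ v, F (s, v.2) * f (s, v) * sin v.1 ∂sphereMeasure) := by
  have cF := h.continuous_force
  have cS := h.continuous_source
  have cf := h.continuous_solution
  have balance := sphere_moment_sub_eq_integral hη cf (by fun_prop) cF
    (fun φ => hasDerivAt_const φ 1) continuous_const h.differentiableAt_force h.transport
  have top := h.integral_odd_at_top_eq_zero 1
  simp only [one_mul, mul_one, mul_zero, zero_sub, pow_one] at balance top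
  rw [top, zero_sub] at balance
  rw [flux, ← neg_eq_iff_eq_neg, balance]
  congr with s
  rw [← sub_zero (∫ v, S (s, v) ∂sphereMeasure), ← integral_sub_sphereMean cf s,
    ← integral_const_mul, ← integral_sub (integrable_sphereMeasure (by fun_prop))
      (integrable_sphereMeasure (by fun_prop)),
    ← integral_sub (integrable_sphereMeasure (by fun_prop))
      (integrable_sphereMeasure (by fun_prop))]
  congr with v
  ring

lemma pressure_sub_eq_integral {η : ℝ} (hη : η ∈ Icc 0 L) :
    pressure f L - pressure f η = 3 * ∫ s in η..L, (∫ v, S (s, v) * sin v.1 ∂sphereMeasure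
      - flux f s + ∫ v, F (s, v.2) * f (s, v) * (1 - 3 * sin v.1 ^ 2) ∂sphereMeasure) := by
  have cF := h.continuous_force
  have cS := h.continuous_source
  have cf := h.continuous_solution
  have balance := sphere_moment_sub_eq_integral hη cf (by fun_prop) cF hasDerivAt_sin
    continuous_cos h.differentiableAt_force h.transport
  simp only [← pow_two] at balance
  rw [pressure, pressure, ← mul_sub, balance]
  congr with s
  have mean_flux : ∫ v, sphereMean f s * sin v.1 ∂sphereMeasure = 0 :=
    integral_sphereMeasure_eq_zero_of_odd (by fun_prop) (by simp)
  rw [← add_zero (∫ v, S (s, v) * sin v.1 ∂sphereMeasure), ← mean_flux, flux,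
    ← integral_add (integrable_sphereMeasure (by fun_prop))
      (integrable_sphereMeasure (by fun_prop)),
    ← integral_sub (integrable_sphereMeasure (by fun_prop))
      (integrable_sphereMeasure (by fun_prop)),
    ← integral_add (integrable_sphereMeasure (by fun_prop))
      (integrable_sphereMeasure (by fun_prop))]
  congr with v
  linear_combination F (s, v.2) * f (s, v) * cos_sq' v.1

lemma energy_identity : dissipation L f = (∫ v, f (0, v) ^ 2 * sin v.1 ∂sphereMeasure) / 2
    + ∫ η in 0..L, (∫ v, f (η, v) * S (η, v) ∂sphereMeasure
      - ∫ v, F (η, v.2) * f (η, v) ^ 2 * sin v.1 ∂sphereMeasure) := by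
  have cF := h.continuous_force
  have cS := h.continuous_source
  have cf := h.continuous_solution
  have crate : Continuous fun η => ∫ v, f (η, v) * S (η, v) ∂sphereMeasure
      - ∫ v, F (η, v.2) * f (η, v) ^ 2 * sin v.1 ∂sphereMeasure :=
    (continuous_integral_sphereMeasure (by fun_prop)).sub
      (continuous_integral_sphereMeasure (by fun_prop))
  have balance := sphere_moment_sub_eq_integral ⟨le_rfl, h.length_nonneg⟩
    (G := fun p => f p ^ 2) (by fun_prop) (by fun_prop) cF (fun φ => hasDerivAt_const φ 1)
    continuous_const h.differentiableAt_force h.transport.sq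
  have rate : ∀ η, ∫ v, (2 * f (η, v) * (S (η, v) - (f (η, v) - sphereMean f η)) * 1
      + F (η, v.2) * f (η, v) ^ 2 * (cos v.1 * 0 - 2 * sin v.1 * 1)) ∂sphereMeasure
      = 2 * ((∫ v, f (η, v) * S (η, v) ∂sphereMeasure
        - ∫ v, F (η, v.2) * f (η, v) ^ 2 * sin v.1 ∂sphereMeasure) - sphereVariance f η) := by
    intro η
    rw [← integral_mul_eq_variance cf, ← integral_sub (integrable_sphereMeasure (by fun_prop))
        (integrable_sphereMeasure (by fun_prop)),
      ← integral_sub (integrable_sphereMeasure (by fun_prop))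
        (integrable_sphereMeasure (by fun_prop)), ← integral_const_mul]
    congr with v
    ring
  simp only [rate, one_mul, h.integral_odd_at_top_eq_zero] at balance
  rw [intervalIntegral.integral_const_mul, intervalIntegral.integral_sub
    (crate.intervalIntegrable _ _) (Continuous.intervalIntegrable (by fun_prop) _ _),
    ← dissipation] at balance
  linarith

lemma abs_integral_source_mul_le {η : ℝ} (hη : η ∈ Icc 0 L) {g : ℝ × ℝ → ℝ} (hg : Continuous g) :
    |∫ v, g v * S (η, v) ∂sphereMeasure| ≤ M * exp (-(K * η)) * ∫ v, |g v| ∂sphereMeasure := by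
  rw [← integral_const_mul]
  refine abs_integral_sphereMeasure_le (by fun_prop) fun v hv => ?_
  rw [abs_mul, mul_comm]
  exact mul_le_mul_of_nonneg_right (h.abs_source_le η hη v hv) (abs_nonneg _)

lemma abs_integral_source_le {η : ℝ} (hη : η ∈ Icc 0 L) {w : ℝ × ℝ → ℝ} (hw : Continuous w)
    (hw1 : ∀ v, |w v| ≤ 1) : |∫ v, w v * S (η, v) ∂sphereMeasure| ≤ M * exp (-(K * η)) := by
  have weight_le : ∫ v, |w v| ∂sphereMeasure ≤ 1 := by
    simpa using integral_sphereMeasure_mono hw.abs (continuous_const (y := 1)) fun v _ => hw1 v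
  have := h.data_bound_nonneg
  exact (h.abs_integral_source_mul_le hη hw).trans
    (mul_le_of_le_one_right (by positivity) weight_le)

lemma integral_decay_add_deviation_le {η : ℝ} (hη : η ∈ Icc 0 L) {a b : ℝ} (ha : 0 ≤ a)
    (hb : 0 ≤ b) : ∫ s in η..L, (a * exp (-(K * s)) + b * sphereDeviation f s)
      ≤ a / K * exp (-(K * η)) + b * totalDeviation L f := by
  have cf := h.continuous_solution
  have cm := continuous_sphereDeviation cf
  rw [intervalIntegral.integral_add (Continuous.intervalIntegrable (by fun_prop) _ _)
    (Continuous.intervalIntegrable (by fun_prop) _ _), intervalIntegral.integral_const_mul,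
    intervalIntegral.integral_const_mul, div_mul_comm, mul_comm _ a]
  gcongr
  · exact integral_exp_neg_mul_le h.rate_pos η L
  · exact intervalIntegral.integral_mono_interval hη.1 hη.2 le_rfl
      (Filter.Eventually.of_forall (sphereDeviation_nonneg f)) (cm.intervalIntegrable _ _)

lemma abs_flux_le {η : ℝ} (hη : η ∈ Icc 0 L) :
    |flux f η| ≤ M / K * exp (-(K * η)) + 2 * δ * totalDeviation L f := by
  have cF := h.continuous_force
  have cf := h.continuous_solution
  have hM := h.data_bound_nonneg
  have hδ := h.force_bound_nonneg
  refine le_trans ?_ (h.integral_decay_add_deviation_le hη hM (mul_nonneg zero_le_two hδ))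
  rw [h.flux_eq_neg_integral hη, abs_neg, ← norm_eq_abs]
  refine intervalIntegral.norm_integral_le_of_norm_le hη.2 (ae_of_all _ fun s hs => ?_)
    (Continuous.intervalIntegrable (by fun_prop) _ _)
  have hs' : s ∈ Icc 0 L := ⟨hη.1.trans hs.1.le, hs.2⟩
  have source := h.abs_integral_source_le hs' (continuous_const (y := 1)) (by simp)
  have force := abs_integral_mul_weight_le (a := fun ψ => F (s, ψ)) (g := fun v => f (s, v))
    (by fun_prop) continuous_sin (by fun_prop) (sphereMean f s) integral_sin_mul_cos_eq_zero
    (h.abs_force_le s hs') abs_sin_le_one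
  simp only [one_mul] at source
  rw [mul_one, ← sphereDeviation] at force
  rw [norm_eq_abs]
  calc _ ≤ _ := abs_sub _ _
    _ ≤ M * exp (-(K * s)) + 2 * δ * sphereDeviation f s := by
        rw [abs_mul, abs_two]
        linarith

lemma abs_pressure_rate_le {η : ℝ} (hη : η ∈ Icc 0 L) :
    |(∫ v, S (η, v) * sin v.1 ∂sphereMeasure) - flux f η
      + ∫ v, F (η, v.2) * f (η, v) * (1 - 3 * sin v.1 ^ 2) ∂sphereMeasure|
    ≤ 2 * δ * totalDeviation L f
      + ((M + M / K) * exp (-(K * η)) + 2 * δ * sphereDeviation f η) := by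
  have cF := h.continuous_force
  have cf := h.continuous_solution
  have source := h.abs_integral_source_le hη (w := fun v => sin v.1) (by fun_prop)
    fun v => abs_sin_le_one v.1
  have force := abs_integral_mul_weight_le (a := fun ψ => F (η, ψ)) (g := fun v => f (η, v))
    (w := fun φ => 1 - 3 * sin φ ^ 2) (by fun_prop) (by fun_prop) (by fun_prop)
    (sphereMean f η) integral_one_sub_three_mul_sin_sq_mul_cos_eq_zero
    (h.abs_force_le η hη) abs_one_sub_three_mul_sin_sq_le
  have flux := h.abs_flux_le hη
  simp only [mul_comm (sin _) (S _)] at source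
  rw [← sphereDeviation] at force
  rw [abs_le] at *
  constructor <;> linarith

lemma abs_pressure_sub_le {η : ℝ} (hη : η ∈ Icc 0 L) : |pressure f L - pressure f η|
    ≤ pressureDrift L δ f + sourceDrift K M * exp (-(K * η)) := by
  have cf := h.continuous_solution
  have hK := h.rate_pos
  have hM := h.data_bound_nonneg
  have hδ := h.force_bound_nonneg
  have hP := h.totalDeviation_nonneg
  have rate_integral : ∫ s in η..L, (2 * δ * totalDeviation L f
        + ((M + M / K) * exp (-(K * s)) + 2 * δ * sphereDeviation f s))
      ≤ L * (2 * δ * totalDeviation L f)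
        + ((M + M / K) / K * exp (-(K * η)) + 2 * δ * totalDeviation L f) := by
    rw [intervalIntegral.integral_add (Continuous.intervalIntegrable (by fun_prop) _ _)
      (Continuous.intervalIntegrable (by fun_prop) _ _), intervalIntegral.integral_const,
      smul_eq_mul]
    gcongr
    · linarith [hη.1]
    · exact h.integral_decay_add_deviation_le hη (by positivity) (by positivity)
  calc |pressure f L - pressure f η|
      ≤ 3 * ∫ s in η..L, (2 * δ * totalDeviation L f
        + ((M + M / K) * exp (-(K * s)) + 2 * δ * sphereDeviation f s)) := by
        rw [h.pressure_sub_eq_integral hη, abs_mul, abs_of_pos three_pos, ← norm_eq_abs]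
        gcongr
        exact intervalIntegral.norm_integral_le_of_norm_le hη.2
          (ae_of_all _ fun s hs => h.abs_pressure_rate_le ⟨hη.1.trans hs.1.le, hs.2⟩)
          (Continuous.intervalIntegrable (by fun_prop) _ _)
    _ ≤ 3 * (L * (2 * δ * totalDeviation L f)
        + ((M + M / K) / K * exp (-(K * η)) + 2 * δ * totalDeviation L f)) := by gcongr
    _ = pressureDrift L δ f + sourceDrift K M * exp (-(K * η)) := by
        rw [pressureDrift, sourceDrift]
        field

lemma integral_sq_inflow_le : ∫ v, f (0, v) ^ 2 * sin v.1 ∂sphereMeasure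
    ≤ 2 * M ^ 2 - boundaryEnergy f := by
  have cf := h.continuous_solution
  have const : ∫ _, 2 * M ^ 2 ∂sphereMeasure = 2 * M ^ 2 := by simp
  rw [← const, boundaryEnergy, ← integral_sub (integrable_sphereMeasure (by fun_prop))
    (integrable_sphereMeasure (by fun_prop))]
  refine integral_sphereMeasure_mono (by fun_prop) (by fun_prop) fun v hv => ?_
  rcases lt_or_ge 0 (sin v.1) with incoming | outgoing
  · have inflow_sq : f (0, v) ^ 2 ≤ M ^ 2 :=
      sq_le_sq.2 ((h.abs_inflow_le v hv incoming).trans (le_abs_self M))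
    have : f (0, v) ^ 2 * sin v.1 ≤ M ^ 2 * 1 :=
      mul_le_mul inflow_sq (sin_le_one _) incoming.le (sq_nonneg M)
    rw [abs_of_pos incoming]
    linarith
  · rw [abs_of_nonpos outgoing]
    nlinarith [sq_nonneg M]

lemma abs_energy_rate_le {η : ℝ} (hη : η ∈ Icc 0 L) :
    |∫ v, f (η, v) * S (η, v) ∂sphereMeasure
      - ∫ v, F (η, v.2) * f (η, v) ^ 2 * sin v.1 ∂sphereMeasure|
    ≤ M * exp (-(K * η)) * (sphereDeviation f η + |sphereMean f η|)
      + δ * (sphereVariance f η + 2 * |sphereMean f η| * sphereDeviation f η) := by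
  have cF := h.continuous_force
  have cf := h.continuous_solution
  have hM := h.data_bound_nonneg
  have hδ := h.force_bound_nonneg
  have source := h.abs_integral_source_mul_le hη (g := fun v => f (η, v)) (by fun_prop)
  have force := abs_integral_mul_weight_le (a := fun ψ => F (η, ψ)) (g := fun v => f (η, v) ^ 2)
    (by fun_prop) continuous_sin (by fun_prop) (sphereMean f η ^ 2) integral_sin_mul_cos_eq_zero
    (h.abs_force_le η hη) abs_sin_le_one
  rw [mul_one] at force
  refine (abs_sub _ _).trans (add_le_add (source.trans ?_) (force.trans ?_))
  · gcongr
    exact integral_abs_le_deviation_add_mean cf η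
  · gcongr
    exact integral_abs_sq_sub_mean_sq_le cf η

lemma sq_pressureDrift_mul_le (hsmall : δ * (1 + L) ^ 2 ≤ 1 / 100) :
    pressureDrift L δ f ^ 2 * (1 + L) ≤ (3 / 50) ^ 2 * dissipation L f := by
  have hL := h.length_nonneg
  have hδ := h.force_bound_nonneg
  have hD := h.dissipation_nonneg
  have cauchy : totalDeviation L f ^ 2 ≤ (1 + L) * dissipation L f :=
    (totalDeviation_sq_le hL h.continuous_solution).trans (by gcongr; linarith)
  calc pressureDrift L δ f ^ 2 * (1 + L)
      = 36 * δ ^ 2 * (1 + L) ^ 3 * totalDeviation L f ^ 2 := by rw [pressureDrift]; ring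
    _ ≤ 36 * δ ^ 2 * (1 + L) ^ 3 * ((1 + L) * dissipation L f) := by gcongr
    _ = 36 * (δ * (1 + L) ^ 2) ^ 2 * dissipation L f := by ring
    _ ≤ 36 * (1 / 100) ^ 2 * dissipation L f := by gcongr
    _ = (3 / 50) ^ 2 * dissipation L f := by ring

lemma sq_pressureDrift_le (hsmall : δ * (1 + L) ^ 2 ≤ 1 / 100) :
    pressureDrift L δ f ^ 2 ≤ (3 / 50) ^ 2 * dissipation L f :=
  (le_mul_of_one_le_right (sq_nonneg _) (by linarith [h.length_nonneg])).trans
    (h.sq_pressureDrift_mul_le hsmall)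

lemma abs_sphereMean_sub_pressure_top_le {η : ℝ} (hη : η ∈ Icc 0 L) :
    |sphereMean f η - pressure f L|
      ≤ 2 * sphereDeviation f η + pressureDrift L δ f + sourceDrift K M * exp (-(K * η)) := by
  have isotropic := abs_sphereMean_sub_pressure_le h.continuous_solution η
  have drift := h.abs_pressure_sub_le hη
  rw [abs_sub_comm] at drift
  linarith [abs_sub_le (sphereMean f η) (pressure f η) (pressure f L)]

lemma abs_pressure_top_le : |pressure f L|
    ≤ 3 * √(boundaryEnergy f) + pressureDrift L δ f + sourceDrift K M := by
  have bottom : |pressure f 0| ≤ 3 * √(boundaryEnergy f) := by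
    refine abs_le_of_sq_le_sq ?_ (by positivity)
    rw [mul_pow, sq_sqrt (boundaryEnergy_nonneg f)]
    linarith [sq_pressure_zero_le h.continuous_solution]
  have drift := h.abs_pressure_sub_le ⟨le_rfl, h.length_nonneg⟩
  rw [mul_zero, neg_zero, exp_zero, mul_one] at drift
  linarith [abs_sub_abs_le_abs_sub (pressure f L) (pressure f 0)]

lemma exp_neg_rate_mul_le_one {η : ℝ} (hη : η ∈ Icc 0 L) : exp (-(K * η)) ≤ 1 :=
  exp_le_one_iff.2 (neg_nonpos.2 (mul_nonneg h.rate_pos.le hη.1))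

lemma abs_sphereMean_le {η : ℝ} (hη : η ∈ Icc 0 L) : |sphereMean f η|
    ≤ 2 * sphereDeviation f η
      + (3 * √(boundaryEnergy f) + 2 * pressureDrift L δ f + 2 * sourceDrift K M) := by
  have := mul_le_of_le_one_right h.sourceDrift_nonneg (h.exp_neg_rate_mul_le_one hη)
  linarith [h.abs_sphereMean_sub_pressure_top_le hη, h.abs_pressure_top_le,
    abs_sub_abs_le_abs_sub (sphereMean f η) (pressure f L)]

lemma abs_energy_rate_le_of_abs_sphereMean_le {η Q : ℝ} (hη : η ∈ Icc 0 L)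
    (hQ : |sphereMean f η| ≤ 2 * sphereDeviation f η + Q) :
    |∫ v, f (η, v) * S (η, v) ∂sphereMeasure
      - ∫ v, F (η, v.2) * f (η, v) ^ 2 * sin v.1 ∂sphereMeasure|
    ≤ (5 * δ + 1 / 4) * sphereVariance f η
      + ((9 * M ^ 2 + M * Q) * exp (-(K * η)) + 2 * δ * Q * sphereDeviation f η) := by
  refine (h.abs_energy_rate_le hη).trans ?_
  have hδ := h.force_bound_nonneg
  have hM := h.data_bound_nonneg
  have hm := sphereDeviation_nonneg f η
  have jensen := sphereDeviation_sq_le h.continuous_solution η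
  have exp_le_one := h.exp_neg_rate_mul_le_one hη
  set e := exp (-(K * η))
  set m := sphereDeviation f η
  have he : 0 ≤ e := (exp_pos _).le
  have force : δ * (sphereVariance f η + 2 * |sphereMean f η| * m)
      ≤ 5 * δ * sphereVariance f η + 2 * δ * Q * m := by
    have : |sphereMean f η| * m ≤ (2 * m + Q) * m := by gcongr
    have : sphereVariance f η + 2 * |sphereMean f η| * m
      ≤ 5 * sphereVariance f η + 2 * Q * m := by linarith
    linarith [mul_le_mul_of_nonneg_left this hδ]
  have young : 3 * (M * e) * m ≤ 9 * M ^ 2 * e + sphereVariance f η / 4 := by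
    have : M ^ 2 * e ^ 2 ≤ M ^ 2 * e := by
      gcongr
      exact pow_le_of_le_one he exp_le_one two_ne_zero
    linarith [sq_nonneg (6 * (M * e) - m)]
  have source : M * e * (m + |sphereMean f η|)
      ≤ 9 * M ^ 2 * e + sphereVariance f η / 4 + M * Q * e := by
    have : M * e * |sphereMean f η| ≤ M * e * (2 * m + Q) := by gcongr
    linarith
  linarith

lemma energy_inequality {Q : ℝ} (hQ0 : 0 ≤ Q)
    (hQ : ∀ η ∈ Icc 0 L, |sphereMean f η| ≤ 2 * sphereDeviation f η + Q) :
    boundaryEnergy f / 2 + dissipation L f ≤ M ^ 2 + (5 * δ + 1 / 4) * dissipation L f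
      + ((9 * M ^ 2 + M * Q) / K + 2 * δ * Q * totalDeviation L f) := by
  have cf := h.continuous_solution
  have hM := h.data_bound_nonneg
  have hδ := h.force_bound_nonneg
  have h0 : (0 : ℝ) ∈ Icc 0 L := ⟨le_rfl, h.length_nonneg⟩
  have rate_integral : |∫ η in 0..L, (∫ v, f (η, v) * S (η, v) ∂sphereMeasure
      - ∫ v, F (η, v.2) * f (η, v) ^ 2 * sin v.1 ∂sphereMeasure)|
      ≤ ∫ η in 0..L, ((5 * δ + 1 / 4) * sphereVariance f η
        + ((9 * M ^ 2 + M * Q) * exp (-(K * η)) + 2 * δ * Q * sphereDeviation f η)) := by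
    rw [← norm_eq_abs]
    exact intervalIntegral.norm_integral_le_of_norm_le h.length_nonneg
      (ae_of_all _ fun η hη => h.abs_energy_rate_le_of_abs_sphereMean_le
        (Ioc_subset_Icc_self hη) (hQ η (Ioc_subset_Icc_self hη)))
      (Continuous.intervalIntegrable (by fun_prop) _ _)
  have decay := h.integral_decay_add_deviation_le h0
    (show 0 ≤ 9 * M ^ 2 + M * Q by positivity) (show 0 ≤ 2 * δ * Q by positivity)
  rw [intervalIntegral.integral_add (Continuous.intervalIntegrable (by fun_prop) _ _)
    (Continuous.intervalIntegrable (by fun_prop) _ _), intervalIntegral.integral_const_mul,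
    ← dissipation] at rate_integral
  rw [mul_zero, neg_zero, exp_zero, mul_one] at decay
  linarith [h.energy_identity, h.integral_sq_inflow_le, (abs_le.1 rate_integral).2]

/-- Every term of the energy inequality which is linear in `Q` is absorbed by Young's inequality,
the force terms thanks to the smallness of `δ (1 + L) ^ 2`. -/
lemma boundaryEnergy_add_dissipation_le (hsmall : δ * (1 + L) ^ 2 ≤ 1 / 100) :
    boundaryEnergy f + dissipation L f ≤ energyBound K M := by
  have hL := h.length_nonneg
  have hδ := h.force_bound_nonneg
  have hD := h.dissipation_nonneg
  have hT := h.pressureDrift_nonneg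
  have hc := h.sourceDrift_nonneg
  have hP := h.totalDeviation_nonneg
  have hd : 0 ≤ M / K := div_nonneg h.data_bound_nonneg h.rate_pos.le
  have ineq := h.energy_inequality (by positivity) fun η hη => h.abs_sphereMean_le hη
  have hT_le : pressureDrift L δ f ≤ 3 / 50 * √(dissipation L f) := by
    refine (sq_le_sq₀ hT (by positivity)).1 ?_
    rw [mul_pow, sq_sqrt hD]
    exact h.sq_pressureDrift_le hsmall
  have hP_le : 6 * (δ * totalDeviation L f) ≤ pressureDrift L δ f := by
    rw [pressureDrift]
    nlinarith [mul_nonneg (mul_nonneg hδ hL) hP]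
  have hδ_le : δ ≤ 1 / 100 :=
    (le_mul_of_one_le_right hδ (one_le_pow₀ (by linarith))).trans hsmall
  have hX := sq_sqrt hD
  have hZ := sq_sqrt (boundaryEnergy_nonneg f)
  have hX0 := sqrt_nonneg (dissipation L f)
  have hZ0 := sqrt_nonneg (boundaryEnergy f)
  set X := √(dissipation L f)
  set Z := √(boundaryEnergy f)
  set s := M / K + sourceDrift K M with hs
  set Q := 3 * Z + 2 * pressureDrift L δ f + 2 * sourceDrift K M
  have absorbed : Q * (M / K + 2 * (δ * totalDeviation L f)) ≤ Z ^ 2 / 4 + X ^ 2 / 4 + 25 * s ^ 2 :=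
    calc Q * (M / K + 2 * (δ * totalDeviation L f))
        ≤ (3 * Z + 3 / 25 * X + 2 * s) * (s + X / 50) := by
          gcongr <;> linarith
      _ ≤ Z ^ 2 / 4 + X ^ 2 / 4 + 25 * s ^ 2 := by
          linarith [sq_nonneg (2 * Z - 15 * s), sq_nonneg (Z - X), sq_nonneg (5 * X - 4 * s),
            sq_nonneg X, sq_nonneg Z, sq_nonneg s]
  have split : (9 * M ^ 2 + M * Q) / K + 2 * δ * Q * totalDeviation L f
      = 9 * M ^ 2 / K + Q * (M / K + 2 * (δ * totalDeviation L f)) := by ring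
  have force : 5 * δ * dissipation L f ≤ 1 / 20 * dissipation L f := by gcongr; linarith
  rw [energyBound, ← hs]
  linarith

lemma sq_pressure_top_le (hsmall : δ * (1 + L) ^ 2 ≤ 1 / 100) :
    pressure f L ^ 2 ≤ 28 * energyBound K M + 3 * sourceDrift K M ^ 2 := by
  have hW := boundaryEnergy_nonneg f
  have hD := h.dissipation_nonneg
  have energy := h.boundaryEnergy_add_dissipation_le hsmall
  have drift := h.sq_pressureDrift_le hsmall
  have top := pow_le_pow_left₀ (abs_nonneg _) h.abs_pressure_top_le 2
  have convexity := add_add_sq_le_three_mul (3 * √(boundaryEnergy f)) (pressureDrift L δ f)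
    (sourceDrift K M)
  rw [mul_pow, sq_sqrt hW] at convexity
  rw [sq_abs] at top
  linarith

lemma sphere_integral_sq_sub_pressure_top_le {η : ℝ} (hη : η ∈ Icc 0 L) :
    ∫ v, (f (η, v) - pressure f L) ^ 2 ∂sphereMeasure ≤ 13 * sphereVariance f η
      + (3 * pressureDrift L δ f ^ 2 + 3 * sourceDrift K M ^ 2 * exp (-(K * η))) := by
  have cf := h.continuous_solution
  have jensen := sphereDeviation_sq_le cf η
  have mean_sq := pow_le_pow_left₀ (abs_nonneg _) (h.abs_sphereMean_sub_pressure_top_le hη) 2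
  have exp_sq := pow_le_of_le_one (exp_pos (-(K * η))).le (h.exp_neg_rate_mul_le_one hη) two_ne_zero
  have source := mul_le_mul_of_nonneg_left exp_sq (sq_nonneg (sourceDrift K M))
  rw [sq_abs] at mean_sq
  rw [integral_sub_const_sq cf]
  linarith [add_add_sq_le_three_mul (2 * sphereDeviation f η) (pressureDrift L δ f)
    (sourceDrift K M * exp (-(K * η)))]

lemma integral_sq_sub_pressure_top_le (hsmall : δ * (1 + L) ^ 2 ≤ 1 / 100) :
    ∫ η in 0..L, ∫ v, (f (η, v) - pressure f L) ^ 2 ∂sphereMeasure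
      ≤ 14 * energyBound K M + 3 * sourceDrift K M ^ 2 / K := by
  have cf := h.continuous_solution
  have energy := h.boundaryEnergy_add_dissipation_le hsmall
  have drift := h.sq_pressureDrift_mul_le hsmall
  have hW := boundaryEnergy_nonneg f
  have hD := h.dissipation_nonneg
  have exp_integral := integral_exp_neg_mul_le h.rate_pos 0 L
  rw [mul_zero, neg_zero, exp_zero] at exp_integral
  calc ∫ η in 0..L, ∫ v, (f (η, v) - pressure f L) ^ 2 ∂sphereMeasure
      ≤ ∫ η in 0..L, (13 * sphereVariance f η
        + (3 * pressureDrift L δ f ^ 2 + 3 * sourceDrift K M ^ 2 * exp (-(K * η)))) :=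
        intervalIntegral.integral_mono_on h.length_nonneg
          ((continuous_integral_sphereMeasure (by fun_prop)).intervalIntegrable _ _)
          (Continuous.intervalIntegrable (by fun_prop) _ _)
          fun η hη => h.sphere_integral_sq_sub_pressure_top_le hη
    _ = 13 * dissipation L f + (3 * (pressureDrift L δ f ^ 2 * L)
        + 3 * sourceDrift K M ^ 2 * ∫ η in 0..L, exp (-(K * η))) := by
        rw [intervalIntegral.integral_add (Continuous.intervalIntegrable (by fun_prop) _ _)
            (Continuous.intervalIntegrable (by fun_prop) _ _),
          intervalIntegral.integral_add (Continuous.intervalIntegrable (by fun_prop) _ _)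
            (Continuous.intervalIntegrable (by fun_prop) _ _)]
        simp only [dissipation, intervalIntegral.integral_const_mul,
          intervalIntegral.integral_const, smul_eq_mul, sub_zero]
        ring
    _ ≤ 13 * dissipation L f + (3 * (pressureDrift L δ f ^ 2 * L)
        + 3 * sourceDrift K M ^ 2 * (1 / K)) := by gcongr
    _ ≤ 14 * energyBound K M + 3 * sourceDrift K M ^ 2 / K := by
        rw [mul_one_div]
        linarith [sq_nonneg (pressureDrift L δ f)]

end IsSlabSolution

end Slab

section Reduction

variable {R₁ R₂ ε n K M L η : ℝ} {S f : ℝ × ℝ × ℝ → ℝ}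

lemma tendsto_mul_one_add_layerL_sq (hn : n < 1 / 2) :
    Filter.Tendsto (fun ε => ε * (1 + layerL ε n) ^ 2) (nhdsWithin 0 (Ioi 0)) (nhds 0) := by
  have square : ∀ ε ∈ Ioi (0 : ℝ),
      (ε ^ (1 / 2 : ℝ) + ε ^ (1 / 2 - n)) ^ 2 = ε * (1 + layerL ε n) ^ 2 := by
    intro ε hε
    have root : (ε ^ (1 / 2 : ℝ)) ^ 2 = ε := by rw [← sqrt_eq_rpow, sq_sqrt (le_of_lt hε)]
    rw [sub_eq_add_neg, rpow_add hε, layerL, ← mul_one_add, mul_pow, root]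
  have limit : Continuous fun ε : ℝ => (ε ^ (1 / 2 : ℝ) + ε ^ (1 / 2 - n)) ^ 2 :=
    ((continuous_rpow_const (by norm_num)).add (continuous_rpow_const (by linarith))).pow 2
  have h := (limit.tendsto 0).mono_left (nhdsWithin_le_nhds (s := Ioi 0))
  rw [zero_rpow (by norm_num), zero_rpow (by linarith), add_zero, zero_pow two_ne_zero] at h
  exact h.congr' (eventually_mem_nhdsWithin.mono square)

lemma exists_forall_mul_one_add_layerL_sq_le (hn : n < 1 / 2) {κ : ℝ} (hκ : 0 < κ) :
    ∃ ε₀ ∈ Ioo (0 : ℝ) 1, ∀ ε ∈ Ioc 0 ε₀, ε * (1 + layerL ε n) ^ 2 ≤ κ := by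
  obtain ⟨a, ha, hsmall⟩ := mem_nhdsGT_iff_exists_Ioc_subset.1
    ((tendsto_mul_one_add_layerL_sq hn).eventually_le_const hκ)
  refine ⟨min a (1 / 2), ⟨lt_min ha (by norm_num), (min_le_right _ _).trans_lt (by norm_num)⟩,
    fun ε hε => hsmall ⟨hε.1, hε.2.trans (min_le_left _ _)⟩⟩

/-- A bound on the force up to half of the smaller radius of curvature. -/
def forceBound (R₁ R₂ ε : ℝ) : ℝ := (2 / R₁ + 2 / R₂) * ε

lemma abs_force_le_forceBound (hR₁ : 0 < R₁) (hR₂ : 0 < R₂) (hε : 0 ≤ ε) (h₁ : ε * η ≤ R₁ / 2)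
    (h₂ : ε * η ≤ R₂ / 2) (ψ : ℝ) : |force R₁ R₂ ε η ψ| ≤ forceBound R₁ R₂ ε := by
  have term_le : ∀ {R s : ℝ}, 0 < R → ε * η ≤ R / 2 → s ^ 2 ≤ 1 →
      0 ≤ s ^ 2 / (R - ε * η) ∧ s ^ 2 / (R - ε * η) ≤ 2 / R := by
    intro R s hR h hs
    have half : R / 2 ≤ R - ε * η := by linarith
    refine ⟨div_nonneg (sq_nonneg s) (by linarith), ?_⟩
    calc s ^ 2 / (R - ε * η) ≤ 1 / (R / 2) := by gcongr
      _ = 2 / R := one_div_div R 2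
  obtain ⟨sin_nonneg, sin_le⟩ := term_le hR₁ h₁ (sin_sq_le_one ψ)
  obtain ⟨cos_nonneg, cos_le⟩ := term_le hR₂ h₂ (cos_sq_le_one ψ)
  rw [force, forceBound, neg_mul, abs_neg, abs_of_nonneg (by positivity), mul_comm]
  gcongr

lemma differentiableAt_force {x : ℝ × ℝ} (h₁ : R₁ - ε * x.1 ≠ 0) (h₂ : R₂ - ε * x.1 ≠ 0) :
    DifferentiableAt ℝ (fun y : ℝ × ℝ => force R₁ R₂ ε y.1 y.2) x := by
  unfold force
  fun_prop (disch := assumption)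

lemma mul_le_half_radius (hR₁ : 0 < R₁) (hR₂ : 0 < R₂) (hε : 0 ≤ ε) (hη : η ∈ Icc 0 L)
    (hsmall : forceBound R₁ R₂ ε * (1 + L) ^ 2 ≤ 1 / 100) :
    ε * η ≤ R₁ / 2 ∧ ε * η ≤ R₂ / 2 := by
  have εη_nonneg := mul_nonneg hε hη.1
  have sum_le : (2 / R₁ + 2 / R₂) * (ε * η) ≤ 1 / 100 := by
    refine le_trans ?_ hsmall
    rw [forceBound, ← mul_assoc]
    have : η ≤ (1 + L) ^ 2 := by nlinarith [hη.1, hη.2]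
    gcongr
  have h₁ : 2 / R₁ * (ε * η) ≤ 1 := by
    have : 0 ≤ 2 / R₂ * (ε * η) := by positivity
    linarith
  have h₂ : 2 / R₂ * (ε * η) ≤ 1 := by
    have : 0 ≤ 2 / R₁ * (ε * η) := by positivity
    linarith
  rw [div_mul_eq_mul_div, div_le_one₀ ‹_›] at h₁ h₂
  constructor <;> linarith

/-- The force blows up at the centres of curvature and so has to be cut off. -/
lemma exists_continuous_eq_force (hR₁ : 0 < R₁) (hR₂ : 0 < R₂) (hε : 0 ≤ ε)
    (hsmall : forceBound R₁ R₂ ε * (1 + L) ^ 2 ≤ 1 / 100) :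
    ∃ F : ℝ × ℝ → ℝ, Continuous F ∧ (∀ η ∈ Icc 0 L, ∀ ψ, F (η, ψ) = force R₁ R₂ ε η ψ) ∧
      (∀ η ∈ Icc 0 L, ∀ ψ, |F (η, ψ)| ≤ forceBound R₁ R₂ ε) ∧
      ∀ η ∈ Ioo 0 L, ∀ ψ, DifferentiableAt ℝ (fun t => F (t, ψ)) η := by
  have smooth : ∀ x ∈ Icc 0 L ×ˢ univ,
      DifferentiableAt ℝ (fun y : ℝ × ℝ => force R₁ R₂ ε y.1 y.2) x := by
    rintro x ⟨hx, -⟩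
    obtain ⟨h₁, h₂⟩ := mul_le_half_radius hR₁ hR₂ hε hx hsmall
    exact differentiableAt_force (by linarith) (by linarith)
  obtain ⟨F, cF, hF⟩ := exists_continuous_eqOn_of_isClosed (isClosed_Icc.prod isClosed_univ)
    fun x hx => (smooth x hx).continuousAt.continuousWithinAt
  have eq_force : ∀ η ∈ Icc 0 L, ∀ ψ, F (η, ψ) = force R₁ R₂ ε η ψ :=
    fun η hη ψ => hF ⟨hη, mem_univ ψ⟩
  refine ⟨F, cF, eq_force, fun η hη ψ => ?_, fun η hη ψ => ?_⟩
  · obtain ⟨h₁, h₂⟩ := mul_le_half_radius hR₁ hR₂ hε hη hsmall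
    rw [eq_force η hη]
    exact abs_force_le_forceBound hR₁ hR₂ hε h₁ h₂ ψ
  · have slice : DifferentiableAt ℝ (fun t => force R₁ R₂ ε t ψ) η :=
      DifferentiableAt.comp (g := fun y : ℝ × ℝ => force R₁ R₂ ε y.1 y.2) η
        (smooth (η, ψ) ⟨Ioo_subset_Icc_self hη, mem_univ ψ⟩) (f := fun t => (t, ψ)) (by fun_prop)
    exact slice.congr_of_eventuallyEq
      (Filter.eventually_of_mem (Icc_mem_nhds hη.1 hη.2) fun t ht => eq_force t ht ψ)

lemma isClosed_milneDomain (L : ℝ) : IsClosed (milneDomain L) :=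
  isClosed_Icc.prod (isClosed_Icc.prod isClosed_Icc)

lemma interior_milneDomain (L : ℝ) : interior (milneDomain L)
    = Ioo 0 L ×ˢ Ioo (-(π / 2)) (π / 2) ×ˢ Ioo (-π) π := by
  simp only [milneDomain, interior_prod_eq, interior_Icc]

lemma mk_mem_milneDomain {v : ℝ × ℝ} (hη : η ∈ Icc 0 L) (hv : v ∈ angularBox) :
    (η, v) ∈ milneDomain L := ⟨hη, hv⟩

lemma continuousOn_slice (hf : ContinuousOn f (milneDomain L)) (hη : η ∈ Icc 0 L) :
    ContinuousOn (fun v => f (η, v)) angularBox :=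
  hf.comp (by fun_prop) fun _ hv => mk_mem_milneDomain hη hv

lemma angAvg_eq_sphereMean (hf : ContinuousOn f (milneDomain L)) (hη : η ∈ Icc 0 L) :
    angAvg f η = sphereMean f η :=
  (integral_sphereMeasure (continuousOn_slice hf hη)).symm

lemma limitValue_eq_pressure_of_eqOn (hL : 0 ≤ L) {g : ℝ × ℝ × ℝ → ℝ}
    (hf : ContinuousOn f (milneDomain L)) (h : EqOn g f (milneDomain L)) :
    limitValue L f = pressure g L := by
  have top : L ∈ Icc 0 L := ⟨hL, le_rfl⟩
  have agree : EqOn (fun v => g (L, v) * sin v.1 ^ 2) (fun v => f (L, v) * sin v.1 ^ 2)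
      angularBox := fun v hv => by simp only [h (mk_mem_milneDomain top hv)]
  rw [pressure, integral_sphereMeasure_congr agree, limitValue,
    integral_sphereMeasure ((continuousOn_slice hf top).fun_mul (by fun_prop))]
  ring

lemma l2Norm_eq_sqrt_integral_of_eqOn (hL : 0 ≤ L) {g : ℝ × ℝ × ℝ → ℝ}
    (hf : ContinuousOn f (milneDomain L)) (h : EqOn g f (milneDomain L)) :
    l2Norm L f = √(4 * π * ∫ η in 0..L, ∫ v, g (η, v) ^ 2 ∂sphereMeasure) := by
  rw [l2Norm, ← intervalIntegral.integral_const_mul]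
  congr 1
  refine intervalIntegral.integral_congr fun η hη => ?_
  rw [uIcc_of_le hL] at hη
  have agree : EqOn (fun v => g (η, v) ^ 2) (fun v => f (η, v) ^ 2) angularBox :=
    fun v hv => by simp only [h (mk_mem_milneDomain hη hv)]
  rw [integral_sphereMeasure_congr agree,
    integral_sphereMeasure ((continuousOn_slice hf hη).fun_pow 2)]
  field

lemma sphereMean_congr {g : ℝ × ℝ × ℝ → ℝ} (h : EqOn g f (milneDomain L)) (hη : η ∈ Icc 0 L) :
    sphereMean g η = sphereMean f η :=
  integral_sphereMeasure_congr fun _ hv => h (mk_mem_milneDomain hη hv)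

lemma IsTransportDeriv.congr {F F' : ℝ × ℝ → ℝ} {G G' N N' : ℝ × ℝ × ℝ → ℝ}
    (h : IsTransportDeriv L F G N) (hF : ∀ η ∈ Icc 0 L, ∀ ψ, F' (η, ψ) = F (η, ψ))
    (hG : EqOn G' G (milneDomain L)) (hN : EqOn N' N (milneDomain L)) :
    IsTransportDeriv L F' G' N' := by
  intro η hη φ hφ ψ hψ
  have hp : milneDomain L ∈ nhds (η, φ, ψ) := by
    rw [← mem_interior_iff_mem_nhds, interior_milneDomain]
    exact ⟨hη, hφ, hψ⟩
  have near : ∀ᶠ x : ℝ × ℝ in nhds (η, φ), (x.1, x.2, ψ) ∈ milneDomain L :=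
    ContinuousAt.eventually_mem (f := fun x : ℝ × ℝ => (x.1, x.2, ψ)) (by fun_prop) hp
  obtain ⟨D, hD, eqn⟩ := h η hη φ hφ ψ hψ
  refine ⟨D, hD.congr_of_eventuallyEq (near.mono fun x hx => hG hx), ?_⟩
  rw [hF η (Ioo_subset_Icc_self hη), eqn, hN (mem_of_mem_nhds hp)]

lemma exists_hasFDerivAt_slice {p : ℝ × ℝ × ℝ} (hf : DifferentiableAt ℝ f p) :
    ∃ f' : ℝ × ℝ →L[ℝ] ℝ, HasFDerivAt (fun x : ℝ × ℝ => f (x.1, x.2, p.2.2)) f' (p.1, p.2.1) ∧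
      f' (1, 0) = dEta f p ∧ f' (0, 1) = dPhi f p := by
  have slice : DifferentiableAt ℝ (fun x : ℝ × ℝ => f (x.1, x.2, p.2.2)) (p.1, p.2.1) :=
    DifferentiableAt.comp (f := fun x : ℝ × ℝ => (x.1, x.2, p.2.2)) (p.1, p.2.1) hf (by fun_prop)
  refine ⟨_, slice.hasFDerivAt, ?_, ?_⟩
  · have along_η : HasDerivAt (fun t => (t, p.2.1)) (1, 0) p.1 :=
      (hasDerivAt_id p.1).prodMk (hasDerivAt_const p.1 p.2.1)
    exact (slice.hasFDerivAt.comp_hasDerivAt p.1 along_η).deriv.symm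
  · have along_φ : HasDerivAt (fun t => (p.1, t)) (0, 1) p.2.1 :=
      (hasDerivAt_const p.2.1 p.1).prodMk (hasDerivAt_id p.2.1)
    exact (slice.hasFDerivAt.comp_hasDerivAt p.2.1 along_φ).deriv.symm

namespace IsMilneSolution

variable {h : ℝ → ℝ → ℝ}

lemma isTransportDeriv (hsol : IsMilneSolution R₁ R₂ ε n h S f) :
    IsTransportDeriv (layerL ε n) (fun x => force R₁ R₂ ε x.1 x.2) f
      fun p => S p - (f p - sphereMean f p.1) := by
  intro η hη φ hφ ψ hψ
  have hp : (η, φ, ψ) ∈ interior (milneDomain (layerL ε n)) := by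
    rw [interior_milneDomain]
    exact ⟨hη, hφ, hψ⟩
  obtain ⟨f', hf', dη, dφ⟩ := exists_hasFDerivAt_slice
    ((hsol.smooth.contDiffAt (mem_interior_iff_mem_nhds.1 hp)).differentiableAt one_ne_zero)
  refine ⟨f', hf', ?_⟩
  have eqn := hsol.eqn _ hp
  rw [angAvg_eq_sphereMean hsol.smooth.continuousOn (Ioo_subset_Icc_self hη)] at eqn
  rw [dη, dφ]
  linarith

lemma exists_isSlabSolution (hsol : IsMilneSolution R₁ R₂ ε n h S f) (hR₁ : 0 < R₁)
    (hR₂ : 0 < R₂) (hε : 0 < ε) (hK : 0 < K)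
    (hsmall : forceBound R₁ R₂ ε * (1 + layerL ε n) ^ 2 ≤ 1 / 100)
    (hh : ∀ q ∈ inflowSet, |h q.1 q.2| ≤ M) (cS : ContinuousOn S (milneDomain (layerL ε n)))
    (hS : ∀ p ∈ milneDomain (layerL ε n), exp (K * p.1) * |S p| ≤ M) :
    ∃ F S' f', IsSlabSolution (layerL ε n) (forceBound R₁ R₂ ε) K M F S' f' ∧
      EqOn f' f (milneDomain (layerL ε n)) := by
  have hL : 0 ≤ layerL ε n := rpow_nonneg hε.le _
  obtain ⟨F, cF, F_eq, F_le, F_diff⟩ := exists_continuous_eq_force hR₁ hR₂ hε.le hsmall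
  obtain ⟨S', cS', S'_eq⟩ := exists_continuous_eqOn_of_isClosed (isClosed_milneDomain _) cS
  obtain ⟨f', cf', f'_eq⟩ := exists_continuous_eqOn_of_isClosed (isClosed_milneDomain _)
    hsol.smooth.continuousOn
  refine ⟨F, S', f', ⟨hL, hK, cF, cS', cf', fun η hη ψ _ => F_le η hη ψ, fun η hη v hv => ?_,
    fun η hη ψ _ => F_diff η hη ψ, ?_, fun v hv hin => ?_, fun v hv => ?_⟩, f'_eq⟩
  · have hp := mk_mem_milneDomain hη hv
    rw [S'_eq hp, exp_neg, ← div_eq_mul_inv, le_div_iff₀' (exp_pos _)]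
    exact hS _ hp
  · refine hsol.isTransportDeriv.congr (fun η hη ψ => F_eq η hη ψ) f'_eq fun p hp => ?_
    simp only [S'_eq hp, f'_eq hp, sphereMean_congr f'_eq hp.1]
  · rw [f'_eq (mk_mem_milneDomain ⟨le_rfl, hL⟩ hv), hsol.inflow v ⟨hin, hv⟩]
    exact hh v ⟨hin, hv⟩
  · have reflected : (-v.1, v.2) ∈ angularBox :=
      ⟨neg_mem_Icc_iff.2 (by simpa using hv.1), hv.2⟩
    have top : layerL ε n ∈ Icc 0 (layerL ε n) := ⟨hL, le_rfl⟩
    rw [f'_eq (mk_mem_milneDomain top hv), f'_eq (mk_mem_milneDomain top reflected)]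
    exact (hsol.reflect v.1 v.2).symm

end IsMilneSolution

end Reduction

section MainTheorem

/-- The constant of the a priori estimate. -/
def milneConstant (K M : ℝ) : ℝ :=
  1 + √(28 * energyBound K M + 3 * sourceDrift K M ^ 2)
    + √(4 * π * (14 * energyBound K M + 3 * sourceDrift K M ^ 2 / K))

lemma IsSlabSolution.abs_pressure_top_le_milneConstant {L δ K M : ℝ} {F : ℝ × ℝ → ℝ}
    {S f : ℝ × ℝ × ℝ → ℝ} (h : IsSlabSolution L δ K M F S f) (hsmall : δ * (1 + L) ^ 2 ≤ 1 / 100) :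
    |pressure f L| ≤ milneConstant K M :=
  (abs_le_sqrt (h.sq_pressure_top_le hsmall)).trans
    ((le_add_of_nonneg_left zero_le_one).trans (le_add_of_nonneg_right (sqrt_nonneg _)))

lemma IsSlabSolution.sqrt_integral_sq_sub_pressure_top_le_milneConstant {L δ K M : ℝ}
    {F : ℝ × ℝ → ℝ} {S f : ℝ × ℝ × ℝ → ℝ} (h : IsSlabSolution L δ K M F S f)
    (hsmall : δ * (1 + L) ^ 2 ≤ 1 / 100) :
    √(4 * π * ∫ η in 0..L, ∫ v, (f (η, v) - pressure f L) ^ 2 ∂sphereMeasure)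
      ≤ milneConstant K M := by
  have := h.integral_sq_sub_pressure_top_le hsmall
  exact (sqrt_le_sqrt (by gcongr)).trans (le_add_of_nonneg_left (by positivity))

lemma DataBounds.abs_inflow_le {K M L : ℝ} {h : ℝ → ℝ → ℝ} {S : ℝ × ℝ × ℝ → ℝ}
    (hd : DataBounds K M L h S) {q : ℝ × ℝ} (hq : q ∈ inflowSet) : |h q.1 q.2| ≤ M := by
  linarith [hd.hBound q hq, abs_nonneg (deriv (fun t => h t q.2) q.1),
    abs_nonneg (deriv (fun t => h q.1 t) q.2)]

lemma DataBounds.exp_mul_abs_source_le {K M L : ℝ} {h : ℝ → ℝ → ℝ} {S : ℝ × ℝ × ℝ → ℝ}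
    (hd : DataBounds K M L h S) {p : ℝ × ℝ × ℝ} (hp : p ∈ milneDomain L) :
    exp (K * p.1) * |S p| ≤ M := by
  refine le_trans ?_ (hd.sBound p hp)
  gcongr
  linarith [abs_nonneg (dEta S p), abs_nonneg (dPhi S p), abs_nonneg (dPsi S p)]

theorem milne_L2_estimate_general {R₁ R₂ n K : ℝ} (M : ℝ) (hR₁ : 0 < R₁) (hR₂ : 0 < R₂)
    (hn : n < 1 / 2) (hK : 0 < K) :
    ∃ ε₀ ∈ Ioo (0 : ℝ) 1, ∃ C > (0 : ℝ),
      ∀ ε ∈ Ioc (0 : ℝ) ε₀, ∀ h : ℝ → ℝ → ℝ, ∀ S f : ℝ × ℝ × ℝ → ℝ,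
        (∀ q ∈ inflowSet, |h q.1 q.2| ≤ M) → ContinuousOn S (milneDomain (layerL ε n)) →
        (∀ p ∈ milneDomain (layerL ε n), exp (K * p.1) * |S p| ≤ M) →
        IsMilneSolution R₁ R₂ ε n h S f →
        |limitValue (layerL ε n) f| ≤ C ∧
        l2Norm (layerL ε n) (fun p => f p - limitValue (layerL ε n) f) ≤ C := by
  obtain ⟨ε₀, hε₀, small⟩ := exists_forall_mul_one_add_layerL_sq_le hn
    (show 0 < 1 / 100 / (2 / R₁ + 2 / R₂) by positivity)
  refine ⟨ε₀, hε₀, milneConstant K M, by unfold milneConstant; positivity, ?_⟩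
  intro ε hε h S f hh cS hS hsol
  have hsmall : forceBound R₁ R₂ ε * (1 + layerL ε n) ^ 2 ≤ 1 / 100 := by
    rw [forceBound, mul_assoc, ← le_div_iff₀' (by positivity)]
    exact small ε hε
  obtain ⟨F, S', f', hslab, f'_eq⟩ :=
    hsol.exists_isSlabSolution hR₁ hR₂ hε.1 hK hsmall hh cS hS
  have hL := hslab.length_nonneg
  have cf := hsol.smooth.continuousOn
  rw [limitValue_eq_pressure_of_eqOn hL cf f'_eq]
  refine ⟨hslab.abs_pressure_top_le_milneConstant hsmall, ?_⟩
  rw [l2Norm_eq_sqrt_integral_of_eqOn (g := fun p => f' p - pressure f' (layerL ε n)) hL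
    (cf.fun_sub continuousOn_const) fun p hp => congr_arg (· - _) (f'_eq hp)]
  exact hslab.sqrt_integral_sq_sub_pressure_top_le_milneConstant hsmall

end MainTheorem

/-- Theorem "Milne LT Theorem": a priori `L²` estimate for the
ε-Milne problem with geometric correction. -/
theorem milne_L2_estimate (R₁ R₂ n K M : ℝ) (hR₁ : 0 < R₁) (hR₂ : 0 < R₂)
    (hn : n ∈ Ioo (0 : ℝ) (1 / 2)) (hK : 0 < K) (hM : 0 < M) :
    ∃ ε₀ ∈ Ioo (0 : ℝ) 1, ∃ C > (0 : ℝ),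
      ∀ ε ∈ Ioc (0 : ℝ) ε₀, ∀ h : ℝ → ℝ → ℝ, ∀ S f : ℝ × ℝ × ℝ → ℝ,
        DataBounds K M (layerL ε n) h S → IsMilneSolution R₁ R₂ ε n h S f →
        |limitValue (layerL ε n) f| ≤ C ∧
        l2Norm (layerL ε n) (fun p => f p - limitValue (layerL ε n) f) ≤ C := by
  obtain ⟨ε₀, hε₀, C, hC, estimate⟩ := milne_L2_estimate_general M hR₁ hR₂ hn.2 hK
  exact ⟨ε₀, hε₀, C, hC, fun ε hε h S f hd =>
    estimate ε hε h S f (fun _ => hd.abs_inflow_le) hd.sSmooth.continuousOn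
      fun _ => hd.exp_mul_abs_source_le⟩

end MilneStmt
end
end

section
/- L∞ bound via the L² bound (Theorem 'Milne LI Theorem'): There exist ε₀ ∈ (0,1) and C > 0, depending only on R₁, R₂, n, K and M, such that for every ε ∈ (0, ε₀] and every classical solution f of the ε-Milne problem with geometric correction whose data h, S satisfy the data bounds, one has ‖f − f_L‖_{L∞} ≤ C (1 + ‖f − f_L‖_{L²}). -/
noncomputable section

open Real Set MeasureTheory

namespace MilneStmt

/-!
Both `u = f - c` and `-u`, for an arbitrary constant `c`, are compared with explicit supersolutions:
at a maximum of the difference the derivative along the characteristics has a sign, except where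
characteristics enter the domain.

Let `N` bound the `L²` norm of `u`, let `E(η)` be the average of `u²` and `m = sup |u|`. By AM-GM,
`ū ≤ N + E / (4 N)`. As `∫ E ≤ N²`, the second term is absorbed by the bounded function
`∫_0^η E / N`, added for outgoing and subtracted for incoming velocities, wherever `|sin φ| ≥ 1/4`.
In the remaining grazing set a bump `(9/8) m cos² φ` makes the comparison trivial. Averaging the
resulting bound gives `ū ≤ O(M + N + |c|) + (3/4 + small) m`, and comparison with a constant then
yields the same bound for `u`, hence for `m`. Finally `|c| ≤ O(M + N)`, since `u` stays close to its
data near the inflow boundary.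
-/

open Filter Topology
section Domain

variable {L : ℝ}

/-- The part `φ₁ ≤ φ` of the domain; `φ₁ = -π/2` gives the whole domain back. -/
def slab (L φ₁ : ℝ) : Set (ℝ × ℝ × ℝ) :=
  Icc (0 : ℝ) L ×ˢ Icc φ₁ (π / 2) ×ˢ Icc (-π) π

lemma slab_subset_milneDomain {φ₁ : ℝ} (hφ₁ : -(π / 2) ≤ φ₁) : slab L φ₁ ⊆ milneDomain L :=
  prod_mono_right (prod_mono_left (Icc_subset_Icc_left hφ₁))

lemma isCompact_slab {φ₁ : ℝ} : IsCompact (slab L φ₁) :=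
  isCompact_Icc.prod (isCompact_Icc.prod isCompact_Icc)

lemma isCompact_milneDomain : IsCompact (milneDomain L) :=
  isCompact_slab

lemma convex_milneDomain : Convex ℝ (milneDomain L) :=
  (convex_Icc _ _).prod ((convex_Icc _ _).prod (convex_Icc _ _))

lemma nonempty_interior_milneDomain (hL : 0 < L) : (interior (milneDomain L)).Nonempty := by
  simp only [milneDomain, interior_prod_eq, interior_Icc, prod_nonempty_iff, nonempty_Ioo]
  exact ⟨hL, by linarith [pi_pos], by linarith [pi_pos]⟩

lemma uniqueDiffOn_milneDomain (hL : 0 < L) : UniqueDiffOn ℝ (milneDomain L) :=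
  uniqueDiffOn_convex convex_milneDomain (nonempty_interior_milneDomain hL)

lemma closure_interior_milneDomain (hL : 0 < L) :
    closure (interior (milneDomain L)) = milneDomain L :=
  (convex_milneDomain.closure_interior_eq_closure_of_nonempty_interior
    (nonempty_interior_milneDomain hL)).trans isCompact_milneDomain.isClosed.closure_eq

lemma reflect_mem_milneDomain {η φ ψ : ℝ} (hp : (η, φ, ψ) ∈ milneDomain L) :
    (η, -φ, ψ) ∈ milneDomain L :=
  ⟨hp.1, ⟨neg_le_neg hp.2.1.2, neg_le.mp hp.2.1.1⟩, hp.2.2⟩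

lemma linfNorm_le {g : ℝ × ℝ × ℝ → ℝ} {C : ℝ} (hC : 0 ≤ C)
    (h : ∀ p ∈ milneDomain L, |g p| ≤ C) : linfNorm L g ≤ C :=
  Real.iSup_le (fun p => Real.iSup_le (h p) hC) hC

end Domain

section AngularAverage

variable {L η : ℝ} {g k : ℝ × ℝ × ℝ → ℝ}

/-- The velocity rectangle, in the order `(ψ, φ)` of the iterated integrals. -/
def velocityRect : Set (ℝ × ℝ) :=
  Icc (-π) π ×ˢ Icc (-(π / 2)) (π / 2)

lemma isCompact_velocityRect : IsCompact velocityRect :=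
  isCompact_Icc.prod isCompact_Icc

lemma integrableOn_velocityRect (hg : ContinuousOn g (milneDomain L)) (hη : η ∈ Icc 0 L) :
    IntegrableOn (fun q : ℝ × ℝ => g (η, q.2, q.1) * cos q.2) velocityRect := by
  have hslice : ContinuousOn (fun q : ℝ × ℝ => g (η, q.2, q.1)) velocityRect :=
    hg.comp (by fun_prop) fun q hq => ⟨hη, hq.2, hq.1⟩
  exact (hslice.mul (by fun_prop)).integrableOn_compact isCompact_velocityRect

lemma angAvg_eq_setIntegral (hg : ContinuousOn g (milneDomain L)) (hη : η ∈ Icc 0 L) :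
    angAvg g η = 1 / (4 * π) * ∫ q in velocityRect, g (η, q.2, q.1) * cos q.2 := by
  have hint := integrableOn_velocityRect hg hη
  rw [Measure.volume_eq_prod] at hint ⊢
  rw [velocityRect, setIntegral_prod _ hint, angAvg,
    intervalIntegral.integral_of_le (by linarith [pi_pos]), integral_Icc_eq_integral_Ioc]
  simp only [intervalIntegral.integral_of_le (by linarith [pi_pos] : -(π / 2) ≤ π / 2),
    integral_Icc_eq_integral_Ioc]

lemma angAvg_mono (hg : ContinuousOn g (milneDomain L)) (hk : ContinuousOn k (milneDomain L))
    (hη : η ∈ Icc 0 L) (h : ∀ p ∈ milneDomain L, p.1 = η → g p ≤ k p) :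
    angAvg g η ≤ angAvg k η := by
  rw [angAvg_eq_setIntegral hg hη, angAvg_eq_setIntegral hk hη]
  refine mul_le_mul_of_nonneg_left ?_ (by positivity)
  refine setIntegral_mono_on (integrableOn_velocityRect hg hη) (integrableOn_velocityRect hk hη)
    isCompact_velocityRect.measurableSet fun q hq => ?_
  exact mul_le_mul_of_nonneg_right (h _ ⟨hη, hq.2, hq.1⟩ rfl) (cos_nonneg_of_mem_Icc hq.2)

lemma angAvg_nonneg (h : ∀ p, 0 ≤ g p) : 0 ≤ angAvg g η := by
  refine mul_nonneg (by positivity) ?_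
  refine intervalIntegral.integral_nonneg (by linarith [pi_pos]) fun ψ _ => ?_
  refine intervalIntegral.integral_nonneg (by linarith [pi_pos]) fun φ hφ => ?_
  exact mul_nonneg (h _) (cos_nonneg_of_mem_Icc hφ)

lemma angAvg_neg : angAvg (fun p => -g p) η = -angAvg g η := by
  simp only [angAvg, neg_mul, intervalIntegral.integral_neg, mul_neg]

lemma angAvg_const_mul (c : ℝ) : angAvg (fun p => c * g p) η = c * angAvg g η := by
  simp only [angAvg, mul_assoc, intervalIntegral.integral_const_mul]
  ring

lemma angAvg_add (hg : ContinuousOn g (milneDomain L)) (hk : ContinuousOn k (milneDomain L))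
    (hη : η ∈ Icc 0 L) : angAvg (fun p => g p + k p) η = angAvg g η + angAvg k η := by
  rw [angAvg_eq_setIntegral (g := fun p => g p + k p) (hg.add hk) hη, angAvg_eq_setIntegral hg hη,
    angAvg_eq_setIntegral hk hη, ← mul_add, ← integral_add (integrableOn_velocityRect hg hη)
      (integrableOn_velocityRect hk hη)]
  simp only [add_mul]

lemma angAvg_comp_sin {ρ : ℝ → ℝ} (hρ : Continuous ρ) :
    angAvg (fun p => ρ (sin p.2.1)) η = 1 / 2 * ∫ s in (-1)..1, ρ s := by
  have hinner : ∫ φ in (-(π / 2))..(π / 2), ρ (sin φ) * cos φ = ∫ s in (-1)..1, ρ s := by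
    have := intervalIntegral.integral_comp_mul_deriv (a := -(π / 2)) (b := π / 2)
      (fun φ _ => hasDerivAt_sin φ) continuous_cos.continuousOn hρ
    simpa only [Function.comp_apply, sin_neg, sin_pi_div_two] using this
  simp only [angAvg, hinner, intervalIntegral.integral_const, smul_eq_mul]
  field_simp
  ring

lemma angAvg_quadratic_sin (a b c : ℝ) :
    angAvg (fun p => a * sin p.2.1 ^ 2 + b * sin p.2.1 + c) η = a / 3 + c := by
  rw [angAvg_comp_sin (ρ := fun s => a * s ^ 2 + b * s + c) (by fun_prop),
    intervalIntegral.integral_add, intervalIntegral.integral_add,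
    intervalIntegral.integral_const_mul, intervalIntegral.integral_const_mul, integral_pow,
    integral_id, intervalIntegral.integral_const, smul_eq_mul]
  · ring
  all_goals exact Continuous.intervalIntegrable (by fun_prop) _ _

lemma angAvg_const (c : ℝ) : angAvg (fun _ => c) η = c := by
  simpa using angAvg_quadratic_sin (η := η) 0 0 c

lemma continuousOn_angAvg (hg : ContinuousOn g (milneDomain L)) :
    ContinuousOn (angAvg g) (Icc 0 L) := by
  obtain ⟨e, he⟩ := ContinuousMap.exists_restrict_eq isCompact_milneDomain.isClosed
    ⟨(milneDomain L).domRestrict g, hg.domRestrict⟩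
  have heq : EqOn e g (milneDomain L) := fun p hp => DFunLike.congr_fun he ⟨p, hp⟩
  have hcont : Continuous fun η => ∫ q in velocityRect, e (η, q.2, q.1) * cos q.2 :=
    continuous_parametric_integral_of_continuous
      (f := fun η (q : ℝ × ℝ) => e (η, q.2, q.1) * cos q.2) (by fun_prop) isCompact_velocityRect
  refine (hcont.const_mul (1 / (4 * π))).continuousOn.congr fun η hη => ?_
  rw [angAvg_eq_setIntegral hg hη]
  congr 1
  refine setIntegral_congr_fun isCompact_velocityRect.measurableSet fun q hq => ?_
  simp only [heq (⟨hη, hq.2, hq.1⟩ : (η, q.2, q.1) ∈ milneDomain L)]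

end AngularAverage

section Energy

variable {L N η : ℝ} {u : ℝ × ℝ × ℝ → ℝ}

/-- The energy `∫_0^η` of the angular average of `u²`, which is `‖u‖²_{L²} / (4π)` at `η = L`. -/
def cumEnergy (u : ℝ × ℝ × ℝ → ℝ) (η : ℝ) : ℝ :=
  ∫ s in (0 : ℝ)..η, angAvg (fun p => u p ^ 2) s

lemma cumEnergy_nonneg (hη : 0 ≤ η) : 0 ≤ cumEnergy u η :=
  intervalIntegral.integral_nonneg hη fun _ _ => angAvg_nonneg fun _ => sq_nonneg _

lemma cumEnergy_eq_l2Norm_sq (hL : 0 ≤ L) : cumEnergy u L = l2Norm L u ^ 2 / (4 * π) := by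
  have heq : cumEnergy u L = 1 / (4 * π) * ∫ η in (0 : ℝ)..L, ∫ ψ in (-π)..π,
      ∫ φ in (-(π / 2))..(π / 2), u (η, φ, ψ) ^ 2 * cos φ :=
    intervalIntegral.integral_const_mul _ _
  have hnonneg := cumEnergy_nonneg (u := u) hL
  rw [heq] at hnonneg
  rw [heq, l2Norm, sq_sqrt (nonneg_of_mul_nonneg_right hnonneg (by positivity))]
  ring

lemma continuousOn_angAvg_sq (hu : ContinuousOn u (milneDomain L)) :
    ContinuousOn (angAvg fun p => u p ^ 2) (Icc 0 L) :=
  continuousOn_angAvg (hu.pow 2)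

lemma intervalIntegrable_angAvg_sq (hu : ContinuousOn u (milneDomain L)) (hη : η ∈ Icc 0 L) :
    IntervalIntegrable (angAvg fun p => u p ^ 2) volume 0 η :=
  ((continuousOn_angAvg_sq hu).mono
    (uIcc_subset_Icc ⟨le_rfl, hη.1.trans hη.2⟩ hη)).intervalIntegrable

lemma hasDerivWithinAt_cumEnergy (hu : ContinuousOn u (milneDomain L)) (hη : η ∈ Icc 0 L) :
    HasDerivWithinAt (cumEnergy u) (angAvg (fun p => u p ^ 2) η) (Icc 0 L) η := by
  have : Fact (η ∈ Icc 0 L) := ⟨hη⟩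
  have hcont := continuousOn_angAvg_sq hu
  exact intervalIntegral.integral_hasDerivWithinAt_right (intervalIntegrable_angAvg_sq hu hη)
    (hcont.stronglyMeasurableAtFilter_nhdsWithin measurableSet_Icc η) (hcont η hη)

lemma cumEnergy_le (hu : ContinuousOn u (milneDomain L)) (hN : l2Norm L u ≤ N)
    (hη : η ∈ Icc 0 L) : cumEnergy u η ≤ N ^ 2 / 12 := by
  have hL : 0 ≤ L := hη.1.trans hη.2
  have hl2 : 0 ≤ l2Norm L u := sqrt_nonneg _
  calc cumEnergy u η ≤ cumEnergy u L :=
        intervalIntegral.integral_mono_interval le_rfl hη.1 hη.2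
          (.of_forall fun _ => angAvg_nonneg fun _ => sq_nonneg _)
          (intervalIntegrable_angAvg_sq hu ⟨hL, le_rfl⟩)
    _ = l2Norm L u ^ 2 / (4 * π) := cumEnergy_eq_l2Norm_sq hL
    _ ≤ N ^ 2 / 12 := by
        gcongr
        linarith [pi_gt_three]

lemma angAvg_le_add_angAvg_sq (hu : ContinuousOn u (milneDomain L)) (hN : 0 < N)
    (hη : η ∈ Icc 0 L) : angAvg u η ≤ N + 1 / (4 * N) * angAvg (fun p => u p ^ 2) η := by
  have hsq : ContinuousOn (fun p => 1 / (4 * N) * u p ^ 2) (milneDomain L) :=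
    continuousOn_const.mul (hu.pow 2)
  calc angAvg u η ≤ angAvg (fun p => N + 1 / (4 * N) * u p ^ 2) η := by
        refine angAvg_mono hu (continuousOn_const.add hsq) hη fun p _ _ => ?_
        have hAMGM : N + 1 / (4 * N) * u p ^ 2 - u p = (u p - 2 * N) ^ 2 / (4 * N) := by
          field_simp
          ring
        linarith [div_nonneg (sq_nonneg (u p - 2 * N)) (by positivity : 0 ≤ 4 * N)]
    _ = N + 1 / (4 * N) * angAvg (fun p => u p ^ 2) η := by
        rw [angAvg_add continuousOn_const hsq hη, angAvg_const, angAvg_const_mul]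

-- On `[-1, 1]` the quadratic `(4 s - 1) (s + 1) / 6` lies below the indicator function of
-- `s ≥ 1/4`, and its average is `1 / 18`.
lemma sq_div_le_angAvg_sq (hu : ContinuousOn u (milneDomain L)) (hη : η ∈ Icc 0 L) {c : ℝ}
    (hc : 0 ≤ c) (h : ∀ p ∈ milneDomain L, p.1 = η → 1 / 4 ≤ sin p.2.1 → u p ≤ -c) :
    c ^ 2 / 18 ≤ angAvg (fun p => u p ^ 2) η := by
  calc c ^ 2 / 18 = angAvg (fun p => c ^ 2 * (2 / 3) * sin p.2.1 ^ 2 + c ^ 2 / 2 * sin p.2.1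
        + -(c ^ 2 / 6)) η := by
        rw [angAvg_quadratic_sin]
        ring
    _ ≤ angAvg (fun p => u p ^ 2) η := by
        refine angAvg_mono (by fun_prop) (hu.pow 2) hη fun p hp hpη => ?_
        have hfactor : c ^ 2 * (2 / 3) * sin p.2.1 ^ 2 + c ^ 2 / 2 * sin p.2.1 + -(c ^ 2 / 6)
            = c ^ 2 * ((4 * sin p.2.1 - 1) * (sin p.2.1 + 1) / 6) := by ring
        have hs₀ := neg_one_le_sin p.2.1
        have hs₁ := sin_le_one p.2.1
        rw [hfactor]
        rcases le_total (1 / 4) (sin p.2.1) with hs | hs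
        · have hle : (4 * sin p.2.1 - 1) * (sin p.2.1 + 1) / 6 ≤ 1 := by nlinarith
          nlinarith [h p hp hpη hs, mul_le_mul_of_nonneg_left hle (sq_nonneg c)]
        · have hle : (4 * sin p.2.1 - 1) * (sin p.2.1 + 1) / 6 ≤ 0 := by nlinarith
          exact (mul_nonpos_of_nonneg_of_nonpos (sq_nonneg c) hle).trans (sq_nonneg _)

end Energy

section Comparison

lemma nonpos_of_le_hasFDerivWithinAt {E : Type*} [NormedAddCommGroup E] [NormedSpace ℝ E]
    {s : Set E} {v : E → ℝ} {v' : E → StrongDual ℝ E} (hs : IsCompact s)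
    (hv : ∀ p ∈ s, HasFDerivWithinAt v (v' p) s p)
    (h : ∀ p ∈ s, v p ≤ 0 ∨ ∃ d ∈ posTangentConeAt s p, v p ≤ v' p d) :
    ∀ p ∈ s, v p ≤ 0 := by
  intro q hq
  obtain ⟨p, hp, hmax⟩ := hs.exists_isMaxOn ⟨q, hq⟩ fun p hp => (hv p hp).continuousWithinAt
  refine (hmax hq).trans ?_
  rcases h p hp with hle | ⟨d, hd, hle⟩
  · exact hle
  · exact hle.trans (hmax.localize.hasFDerivWithinAt_nonpos (hv p hp) hd)

lemma eventually_add_mul_mem_Icc {a b x v : ℝ} (hx : x ∈ Icc a b) (hneg : v < 0 → a < x)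
    (hpos : 0 < v → x < b) : ∀ᶠ t in 𝓝[>] (0 : ℝ), x + t * v ∈ Icc a b := by
  have htendsto : Tendsto (fun t : ℝ => x + t * v) (𝓝[>] 0) (𝓝 x) := by
    refine Tendsto.mono_left (Continuous.tendsto' (by fun_prop) _ _ (by ring)) nhdsWithin_le_nhds
  rcases lt_trichotomy v 0 with hv | rfl | hv
  · filter_upwards [htendsto.eventually_const_lt (hneg hv), self_mem_nhdsWithin] with t hta ht
    exact ⟨hta.le, by nlinarith [hx.2, mem_Ioi.mp ht]⟩
  · simpa using hx
  · filter_upwards [htendsto.eventually_lt_const (hpos hv), self_mem_nhdsWithin] with t htb ht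
    exact ⟨by nlinarith [hx.1, mem_Ioi.mp ht], htb.le⟩

variable {L φ₁ M B : ℝ} {F : ℝ → ℝ → ℝ} {u : ℝ × ℝ × ℝ → ℝ} {p : ℝ × ℝ × ℝ}

/-- The velocity `(sin φ, F cos φ, 0)` of the characteristics of the Milne problem with a general
force `F(η, ψ)`. -/
def charVelocity (F : ℝ → ℝ → ℝ) (p : ℝ × ℝ × ℝ) : ℝ × ℝ × ℝ :=
  (sin p.2.1, F p.1 p.2.2 * cos p.2.1, 0)

/-- The two faces `η = 0`, `η = L` of the domain where characteristics enter: the in-flow boundary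
and the part of the reflecting boundary with `sin φ < 0`. -/
def entryBoundary (L : ℝ) : Set (ℝ × ℝ × ℝ) :=
  {p | p.1 = 0 ∧ 0 < sin p.2.1 ∨ p.1 = L ∧ sin p.2.1 < 0}

/-- The operator `sin φ ∂u/∂η + F cos φ ∂u/∂φ + u - ū`. The one-sided derivative `fderivWithin`
makes it meaningful up to the boundary of the domain. -/
def milneOperator (L : ℝ) (F : ℝ → ℝ → ℝ) (u : ℝ × ℝ × ℝ → ℝ) (p : ℝ × ℝ × ℝ) : ℝ :=
  fderivWithin ℝ u (milneDomain L) p (charVelocity F p) + u p - angAvg u p.1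

/-- Subsolutions of the Milne problem with source at most `M`, in-flow data at most `B` and a
general force pointing towards decreasing `φ`. -/
structure IsMilneSubsolution (L M B : ℝ) (F : ℝ → ℝ → ℝ) (u : ℝ × ℝ × ℝ → ℝ) : Prop where
  differentiableOn : DifferentiableOn ℝ u (milneDomain L)
  force_nonpos : ∀ p ∈ milneDomain L, F p.1 p.2.2 ≤ 0
  milneOperator_le : ∀ p ∈ milneDomain L, milneOperator L F u p ≤ M
  inflow_le : ∀ q ∈ inflowSet, u (0, q.1, q.2) ≤ B
  reflect : ∀ φ ψ : ℝ, u (L, φ, ψ) = u (L, -φ, ψ)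

lemma neg_charVelocity_mem_posTangentConeAt (hφ₁ : -(π / 2) ≤ φ₁) (hp : p ∈ slab L φ₁)
    (hF : F p.1 p.2.2 ≤ 0) (hentry : p ∉ entryBoundary L) :
    -charVelocity F p ∈ posTangentConeAt (slab L φ₁) p := by
  obtain ⟨η, φ, ψ⟩ := p
  obtain ⟨hη, hφ, hψ⟩ := hp
  simp only [entryBoundary, mem_ofPred_eq, not_or, not_and] at hF hentry hη hφ
  have hcos : 0 ≤ cos φ := cos_nonneg_of_mem_Icc ⟨hφ₁.trans hφ.1, hφ.2⟩
  have hη' := eventually_add_mul_mem_Icc (v := -sin φ) hη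
    (fun hv => hη.1.lt_of_ne' fun h => hentry.1 h (neg_lt_zero.mp hv))
    (fun hv => hη.2.lt_of_ne fun h => hentry.2 h (neg_pos.mp hv))
  have hφ' := eventually_add_mul_mem_Icc (v := -(F η ψ * cos φ)) hφ
    (fun hv => absurd (mul_nonpos_of_nonpos_of_nonneg hF hcos) (neg_lt_zero.mp hv).not_ge)
    (fun hv => hφ.2.lt_of_ne fun h => by simp [h] at hv)
  refine mem_posTangentConeAt_of_frequently_mem (Eventually.frequently ?_)
  filter_upwards [hη', hφ'] with t htη htφ
  exact ⟨by simpa [charVelocity] using htη, by simpa [charVelocity] using htφ,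
    by simpa [charVelocity] using hψ⟩

lemma IsMilneSubsolution.le_of_supersolution {w : ℝ × ℝ × ℝ → ℝ}
    {w' : ℝ × ℝ × ℝ → StrongDual ℝ (ℝ × ℝ × ℝ)}
    (hu : IsMilneSubsolution L M B F u) (hφ₁ : -(π / 2) ≤ φ₁)
    (hw : ∀ p ∈ slab L φ₁, HasFDerivWithinAt w (w' p) (slab L φ₁) p)
    (hentry : ∀ p ∈ slab L φ₁, p ∈ entryBoundary L → u p ≤ w p)
    (hsuper : ∀ p ∈ slab L φ₁, u p ≤ w p ∨ angAvg u p.1 + M ≤ w' p (charVelocity F p) + w p) :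
    ∀ p ∈ slab L φ₁, u p ≤ w p := by
  have hsub := slab_subset_milneDomain (L := L) hφ₁
  have hderiv : ∀ p ∈ slab L φ₁, HasFDerivWithinAt (fun p => u p - w p)
      (fderivWithin ℝ u (milneDomain L) p - w' p) (slab L φ₁) p := fun p hp =>
    ((hu.differentiableOn p (hsub hp)).hasFDerivWithinAt.mono hsub).sub (hw p hp)
  suffices ∀ p ∈ slab L φ₁, u p - w p ≤ 0 from fun p hp => sub_nonpos.mp (this p hp)
  refine nonpos_of_le_hasFDerivWithinAt isCompact_slab hderiv fun p hp => ?_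
  by_cases hpe : p ∈ entryBoundary L
  · exact .inl (sub_nonpos.mpr (hentry p hp hpe))
  refine (hsuper p hp).imp sub_nonpos.mpr fun hle => ⟨-charVelocity F p,
    neg_charVelocity_mem_posTangentConeAt hφ₁ hp (hu.force_nonpos p (hsub hp)) hpe, ?_⟩
  have hop := hu.milneOperator_le p (hsub hp)
  rw [milneOperator] at hop
  rw [map_neg, sub_apply]
  linarith

/-- The comparison functions `g(η) + b cos² φ`. -/
def barrier (g : ℝ → ℝ) (b : ℝ) (p : ℝ × ℝ × ℝ) : ℝ :=
  g p.1 + b * cos p.2.1 ^ 2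

lemma IsMilneSubsolution.le_barrier {g g' : ℝ → ℝ} {b : ℝ}
    (hu : IsMilneSubsolution L M B F u) (hφ₁ : -(π / 2) ≤ φ₁)
    (hg : ∀ η ∈ Icc 0 L, HasDerivWithinAt g (g' η) (Icc 0 L) η)
    (hentry : ∀ p ∈ slab L φ₁, p ∈ entryBoundary L → u p ≤ barrier g b p)
    (hsuper : ∀ p ∈ slab L φ₁, u p ≤ barrier g b p ∨
      angAvg u p.1 + M ≤ sin p.2.1 * g' p.1 - 2 * b * (F p.1 p.2.2 * sin p.2.1) * cos p.2.1 ^ 2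
        + barrier g b p) :
    ∀ p ∈ slab L φ₁, u p ≤ barrier g b p := by
  let ηProj := ContinuousLinearMap.fst ℝ ℝ (ℝ × ℝ)
  let φProj := ContinuousLinearMap.fst ℝ ℝ ℝ ∘L ContinuousLinearMap.snd ℝ ℝ (ℝ × ℝ)
  have hderiv : ∀ p ∈ slab L φ₁, HasFDerivWithinAt (barrier g b)
      (g' p.1 • ηProj + (b * (2 * cos p.2.1 * -sin p.2.1)) • φProj) (slab L φ₁) p := by
    intro p hp
    have hcos : HasDerivAt (fun φ => b * cos φ ^ 2) (b * (2 * cos p.2.1 * -sin p.2.1)) p.2.1 := by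
      simpa using ((hasDerivAt_cos p.2.1).pow 2).const_mul b
    have hη := (hg p.1 hp.1).comp_hasFDerivWithinAt p ηProj.hasFDerivWithinAt
      fun q (hq : q ∈ slab L φ₁) => hq.1
    have hφ := hcos.comp_hasFDerivWithinAt p (s := slab L φ₁) φProj.hasFDerivWithinAt
    exact hη.add hφ
  refine hu.le_of_supersolution hφ₁ hderiv hentry fun p hp => (hsuper p hp).imp_right fun hle => ?_
  refine hle.trans_eq ?_
  simp only [mul_neg, charVelocity, add_apply, smul_apply, ContinuousLinearMap.coe_fst',
    smul_eq_mul, ContinuousLinearMap.comp_apply, ContinuousLinearMap.coe_snd', neg_mul,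
    add_left_inj, ηProj, φProj]
  ring

end Comparison

section Estimates

variable {L M B N κ m η : ℝ} {F : ℝ → ℝ → ℝ} {u : ℝ × ℝ × ℝ → ℝ} {p : ℝ × ℝ × ℝ}

lemma mem_slab_zero (hp : p ∈ milneDomain L) (hsin : 0 ≤ sin p.2.1) : p ∈ slab L 0 := by
  refine ⟨hp.1, ⟨?_, hp.2.1.2⟩, hp.2.2⟩
  by_contra! hneg
  exact (sin_neg_of_neg_of_neg_pi_lt hneg (by linarith [hp.2.1.1, pi_pos])).not_ge hsin

lemma sin_nonneg_of_mem_slab_zero (hp : p ∈ slab L 0) : 0 ≤ sin p.2.1 :=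
  sin_nonneg_of_nonneg_of_le_pi hp.2.1.1 (by linarith [hp.2.1.2, pi_pos])

lemma le_barrier_of_abs_sin_lt {g : ℝ → ℝ} (hm : 0 ≤ m) (hle : u p ≤ m) (hg : 0 ≤ g p.1)
    (hsin : |sin p.2.1| < 1 / 4) : u p ≤ barrier g (9 / 8 * m) p := by
  have hcos : 15 / 16 ≤ cos p.2.1 ^ 2 := by
    nlinarith [sin_sq_add_cos_sq p.2.1, sq_abs (sin p.2.1), abs_nonneg (sin p.2.1)]
  have hbump := mul_le_mul_of_nonneg_left hcos (by positivity : 0 ≤ 9 / 8 * m)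
  simp only [barrier]
  linarith

-- Averaging `cos² φ` gains the factor `2/3`, so that the grazing bump `(9/8) m cos² φ` contributes
-- only `(3/4) m` to the average.
lemma angAvg_le_of_le_bump {A : ℝ} (hu : ContinuousOn u (milneDomain L)) (hη : η ∈ Icc 0 L)
    (hle : ∀ p ∈ milneDomain L, u p ≤ A + 9 / 8 * m * cos p.2.1 ^ 2) :
    angAvg u η ≤ A + 3 / 4 * m :=
  calc angAvg u η ≤ angAvg (fun p => -(9 / 8 * m) * sin p.2.1 ^ 2 + 0 * sin p.2.1
          + (A + 9 / 8 * m)) η :=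
        angAvg_mono hu (by fun_prop) hη fun p hp _ =>
          (hle p hp).trans_eq (by rw [cos_sq']; ring)
    _ = A + 3 / 4 * m := by
        rw [angAvg_quadratic_sin]
        ring

namespace IsMilneSubsolution

lemma continuousOn (hu : IsMilneSubsolution L M B F u) : ContinuousOn u (milneDomain L) :=
  hu.differentiableOn.continuousOn

lemma le_of_mem_entryBoundary (hu : IsMilneSubsolution L M B F u) (hp : p ∈ milneDomain L)
    (hsin : 0 ≤ sin p.2.1) (hentry : p ∈ entryBoundary L) : u p ≤ B := by
  obtain ⟨η, φ, ψ⟩ := p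
  rcases hentry with ⟨rfl, hpos⟩ | ⟨-, hneg⟩
  · exact hu.inflow_le (φ, ψ) ⟨hpos, hp.2⟩
  · exact absurd hneg hsin.not_gt

lemma le_barrier_of_mem_entryBoundary (hu : IsMilneSubsolution L M B F u) {g : ℝ → ℝ} {b : ℝ}
    (hout : ∀ p ∈ slab L 0, u p ≤ barrier g b p) (hp : p ∈ milneDomain L)
    (hentry : p ∈ entryBoundary L) : u p ≤ barrier g b p := by
  obtain ⟨η, φ, ψ⟩ := p
  rcases hentry with ⟨rfl, hpos⟩ | ⟨rfl, hneg⟩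
  · exact hout _ (mem_slab_zero hp hpos.le)
  · have hle := hout _ (mem_slab_zero (reflect_mem_milneDomain hp)
      (by simpa only [sin_neg, neg_nonneg] using hneg.le))
    rw [hu.reflect]
    simpa only [barrier, cos_neg] using hle

lemma angAvg_le (hu : IsMilneSubsolution L M B F u) (hN : 0 < N) (hη : η ∈ Icc 0 L) :
    angAvg u η ≤ N + 1 / 4 * (angAvg (fun p => u p ^ 2) η / N) :=
  (angAvg_le_add_angAvg_sq hu.continuousOn hN hη).trans_eq (by field_simp)

lemma hasDerivWithinAt_cumEnergy_div (hu : IsMilneSubsolution L M B F u) (hη : η ∈ Icc 0 L) :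
    HasDerivWithinAt (fun η => cumEnergy u η / N) (angAvg (fun p => u p ^ 2) η / N) (Icc 0 L) η :=
  (hasDerivWithinAt_cumEnergy hu.continuousOn hη).div_const N

lemma cumEnergy_div_mem_Icc (hu : IsMilneSubsolution L M B F u) (hN : 0 < N)
    (hl2 : l2Norm L u ≤ N) (hη : η ∈ Icc 0 L) : cumEnergy u η / N ∈ Icc 0 (N / 12) := by
  refine ⟨div_nonneg (cumEnergy_nonneg hη.1) hN.le, ?_⟩
  rw [div_le_iff₀ hN]
  exact (cumEnergy_le hu.continuousOn hl2 hη).trans_eq (by ring)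

lemma le_near_inflow (hu : IsMilneSubsolution L M B F u) (hN : 0 < N) (hB : B ≤ N + M) :
    ∀ p ∈ slab L (arcsin (1 / 4)),
      u p ≤ B + 4 * (N + M - B) * p.1 + cumEnergy u p.1 / N := by
  have hφ₁ : -(π / 2) ≤ arcsin (1 / 4) := neg_pi_div_two_le_arcsin _
  have hsin : ∀ p ∈ slab L (arcsin (1 / 4)), 1 / 4 ≤ sin p.2.1 := fun p hp =>
    (arcsin_le_iff_le_sin (by norm_num) ⟨hφ₁.trans hp.2.1.1, hp.2.1.2⟩).mp hp.2.1.1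
  let g : ℝ → ℝ := fun η => B + 4 * (N + M - B) * η + cumEnergy u η / N
  have hg : ∀ η ∈ Icc 0 L, HasDerivWithinAt g
      (4 * (N + M - B) + angAvg (fun p => u p ^ 2) η / N) (Icc 0 L) η := fun η hη => by
    have hlin := ((hasDerivWithinAt_id η (Icc 0 L)).const_mul (4 * (N + M - B))).const_add B
    rw [mul_one] at hlin
    exact hlin.add (hu.hasDerivWithinAt_cumEnergy_div hη)
  have hBg : ∀ p ∈ slab L (arcsin (1 / 4)), B ≤ barrier g 0 p := fun p hp => by
    have hG := div_nonneg (cumEnergy_nonneg (u := u) hp.1.1) hN.le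
    have hlin : 0 ≤ 4 * (N + M - B) * p.1 := mul_nonneg (by linarith) hp.1.1
    simp only [barrier, g]
    linarith
  have hle := hu.le_barrier hφ₁ hg
    (fun p hp hentry => (hu.le_of_mem_entryBoundary (slab_subset_milneDomain hφ₁ hp)
      (by linarith [hsin p hp]) hentry).trans (hBg p hp))
    (fun p hp => .inr <| by
      have havg := hu.angAvg_le hN hp.1
      have hE : 0 ≤ angAvg (fun p => u p ^ 2) p.1 / N :=
        div_nonneg (angAvg_nonneg fun _ => sq_nonneg _) hN.le
      have htransport := mul_le_mul_of_nonneg_right (hsin p hp)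
        (by linarith : 0 ≤ 4 * (N + M - B) + angAvg (fun p => u p ^ 2) p.1 / N)
      linarith [hBg p hp])
  simpa [barrier, g] using hle

lemma neg_inflow_le (hu : IsMilneSubsolution L M B F u) (hL : 1 / 16 ≤ L) (hM : 0 ≤ M)
    (hN : 0 < N) (hl2 : l2Norm L u ≤ N) : -B ≤ 8 * N + M := by
  by_contra! hlarge
  let c := -(3 / 4 * B + N / 3 + M / 4)
  have hc : 0 ≤ c := by simp only [c]; linarith
  have hηL : (1 / 16 : ℝ) ∈ Icc 0 L := ⟨by norm_num, hL⟩
  have hle : ∀ η ∈ Icc (0 : ℝ) (1 / 16), c ^ 2 / 18 ≤ angAvg (fun p => u p ^ 2) η := by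
    intro η hη
    have hηL : η ∈ Icc 0 L := ⟨hη.1, hη.2.trans hL⟩
    refine sq_div_le_angAvg_sq hu.continuousOn hηL hc fun p hp hpη hsin => ?_
    have hφ : arcsin (1 / 4) ≤ p.2.1 := (arcsin_le_iff_le_sin (by norm_num) hp.2.1).mpr hsin
    have hup := hu.le_near_inflow hN (by linarith) p ⟨hp.1, ⟨hφ, hp.2.1.2⟩, hp.2.2⟩
    have hG := (hu.cumEnergy_div_mem_Icc hN hl2 hp.1).2
    have hlin := mul_le_mul_of_nonneg_left (hpη ▸ hη.2 : p.1 ≤ 1 / 16)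
      (by linarith : 0 ≤ 4 * (N + M - B))
    simp only [c]
    linarith
  have henergy : c ^ 2 / 288 ≤ N ^ 2 / 12 :=
    calc c ^ 2 / 288 = ∫ _ in (0 : ℝ)..1 / 16, c ^ 2 / 18 := by
          rw [intervalIntegral.integral_const, smul_eq_mul]
          ring
      _ ≤ cumEnergy u (1 / 16) := intervalIntegral.integral_mono_on (by norm_num)
          intervalIntegrable_const (intervalIntegrable_angAvg_sq hu.continuousOn hηL) hle
      _ ≤ N ^ 2 / 12 := cumEnergy_le hu.continuousOn hl2 hηL
  have hc5 : c ≤ 5 * N := abs_le_of_sq_le_sq' (by nlinarith) (by positivity) |>.2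
  simp only [c] at hc5
  linarith

lemma le_of_outgoing (hu : IsMilneSubsolution L M B F u) (hM : 0 ≤ M) (hB : 0 ≤ B) (hN : 0 < N)
    (hm : 0 ≤ m) (hle : ∀ p ∈ milneDomain L, u p ≤ m) :
    ∀ p ∈ slab L 0, u p ≤ barrier (fun η => B + M + N + cumEnergy u η / N) (9 / 8 * m) p := by
  have hsub : slab L 0 ⊆ milneDomain L := slab_subset_milneDomain (by linarith [pi_pos])
  have hG : ∀ p ∈ slab L 0, 0 ≤ cumEnergy u p.1 / N := fun p hp =>
    div_nonneg (cumEnergy_nonneg hp.1.1) hN.le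
  have hbump : ∀ p : ℝ × ℝ × ℝ, 0 ≤ 9 / 8 * m * cos p.2.1 ^ 2 := fun p => by positivity
  refine hu.le_barrier (by linarith [pi_pos])
    (fun η hη => (hu.hasDerivWithinAt_cumEnergy_div hη).const_add (B + M + N))
    (fun p hp hentry => ?_) fun p hp => ?_
  · have hpB := hu.le_of_mem_entryBoundary (hsub hp) (sin_nonneg_of_mem_slab_zero hp) hentry
    simp only [barrier]
    linarith [hG p hp, hbump p]
  have hsin := sin_nonneg_of_mem_slab_zero hp
  rcases lt_or_ge (sin p.2.1) (1 / 4) with hgraze | hsin'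
  · exact .inl (le_barrier_of_abs_sin_lt hm (hle p (hsub hp)) (by linarith [hG p hp])
      (by rwa [abs_of_nonneg hsin]))
  right
  have hforce : 9 / 8 * m * (F p.1 p.2.2 * sin p.2.1) * cos p.2.1 ^ 2 ≤ 0 := by
    have := mul_nonpos_of_nonpos_of_nonneg (hu.force_nonpos p (hsub hp)) hsin
    nlinarith [mul_nonneg hm (sq_nonneg (cos p.2.1))]
  have htransport := mul_le_mul_of_nonneg_right hsin'
    (div_nonneg (angAvg_nonneg fun _ => sq_nonneg _) hN.le : 0 ≤ angAvg (fun p => u p ^ 2) p.1 / N)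
  have havg := hu.angAvg_le hN hp.1
  simp only [barrier]
  linarith [hG p hp, hbump p]

lemma le_of_incoming (hu : IsMilneSubsolution L M B F u) (hM : 0 ≤ M) (hB : 0 ≤ B) (hN : 0 < N)
    (hl2 : l2Norm L u ≤ N) (hm : 0 ≤ m) (hle : ∀ p ∈ milneDomain L, u p ≤ m) (hκ : 0 ≤ κ)
    (hF : ∀ p ∈ milneDomain L, -κ ≤ F p.1 p.2.2) :
    ∀ p ∈ milneDomain L, u p ≤
      barrier (fun η => B + M + 2 * N + 3 * κ * m - cumEnergy u η / N) (9 / 8 * m) p := by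
  have hκm : 0 ≤ κ * m := mul_nonneg hκ hm
  have hG : ∀ p ∈ milneDomain L, cumEnergy u p.1 / N ∈ Icc 0 (N / 12) := fun p hp =>
    hu.cumEnergy_div_mem_Icc hN hl2 hp.1
  have hbump : ∀ p : ℝ × ℝ × ℝ, 0 ≤ 9 / 8 * m * cos p.2.1 ^ 2 := fun p => by positivity
  have hout : ∀ p ∈ slab L 0, u p ≤
      barrier (fun η => B + M + 2 * N + 3 * κ * m - cumEnergy u η / N) (9 / 8 * m) p := by
    intro p hp
    refine (hu.le_of_outgoing hM hB hN hm hle p hp).trans ?_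
    simp only [barrier]
    linarith [(hG p ⟨hp.1, ⟨by linarith [hp.2.1.1, pi_pos], hp.2.1.2⟩, hp.2.2⟩).2]
  refine hu.le_barrier le_rfl
    (fun η hη => (hu.hasDerivWithinAt_cumEnergy_div hη).const_sub (B + M + 2 * N + 3 * κ * m))
    (fun p hp hentry => hu.le_barrier_of_mem_entryBoundary hout hp hentry) fun p hp => ?_
  rcases le_or_gt 0 (sin p.2.1) with hsin | hsin
  · exact .inl (hout p (mem_slab_zero hp hsin))
  rcases lt_or_ge (-(1 / 4)) (sin p.2.1) with hgraze | hsin'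
  · exact .inl (le_barrier_of_abs_sin_lt hm (hle p hp) (by linarith [(hG p hp).2])
      (by rw [abs_of_neg hsin]; linarith))
  right
  have hforce : 9 / 8 * m * (F p.1 p.2.2 * sin p.2.1) * cos p.2.1 ^ 2 ≤ 9 / 8 * (κ * m) := by
    have hFsin : F p.1 p.2.2 * sin p.2.1 ≤ κ := by
      nlinarith [hF p hp, hu.force_nonpos p hp, neg_one_le_sin p.2.1]
    calc _ ≤ 9 / 8 * m * κ * 1 := by
          gcongr
          exact cos_sq_le_one _
      _ = 9 / 8 * (κ * m) := by ring
  have htransport := mul_le_mul_of_nonneg_right (by linarith : 1 / 4 ≤ -sin p.2.1)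
    (div_nonneg (angAvg_nonneg fun _ => sq_nonneg _) hN.le : 0 ≤ angAvg (fun p => u p ^ 2) p.1 / N)
  have havg := hu.angAvg_le hN hp.1
  simp only [barrier]
  linarith [(hG p hp).2, hbump p]

lemma le_of_angAvg_le {T : ℝ} (hu : IsMilneSubsolution L M B F u) (hBT : B ≤ T)
    (havg : ∀ η ∈ Icc 0 L, angAvg u η + M ≤ T) : ∀ p ∈ milneDomain L, u p ≤ T := by
  have hconst : ∀ η ∈ Icc 0 L, HasDerivWithinAt (fun _ => T) 0 (Icc 0 L) η := fun η _ =>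
    hasDerivWithinAt_const η _ T
  have hsub : slab L 0 ⊆ milneDomain L := slab_subset_milneDomain (by linarith [pi_pos])
  have hout := hu.le_barrier (φ₁ := 0) (b := 0) (by linarith [pi_pos]) hconst
    (fun p hp hentry => by
      have := hu.le_of_mem_entryBoundary (hsub hp) (sin_nonneg_of_mem_slab_zero hp) hentry
      simpa [barrier] using this.trans hBT)
    (fun p hp => .inr (by simpa [barrier] using havg p.1 hp.1))
  have hall := hu.le_barrier (φ₁ := -(π / 2)) le_rfl hconst
    (fun p hp => hu.le_barrier_of_mem_entryBoundary hout hp)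
    (fun p hp => .inr (by simpa [barrier] using havg p.1 hp.1))
  exact fun p hp => by simpa [barrier] using hall p hp

theorem le_of_le (hu : IsMilneSubsolution L M B F u) (hM : 0 ≤ M) (hB : 0 ≤ B) (hN : 0 < N)
    (hl2 : l2Norm L u ≤ N) (hm : 0 ≤ m) (hle : ∀ p ∈ milneDomain L, u p ≤ m) (hκ : 0 ≤ κ)
    (hF : ∀ p ∈ milneDomain L, -κ ≤ F p.1 p.2.2) :
    ∀ p ∈ milneDomain L, u p ≤ B + 2 * M + 2 * N + (3 / 4 + 3 * κ) * m := by
  have hκm : 0 ≤ κ * m := mul_nonneg hκ hm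
  refine hu.le_of_angAvg_le (by linarith) fun η hη => ?_
  have havg := angAvg_le_of_le_bump (A := B + M + 2 * N + 3 * κ * m) (m := m) hu.continuousOn hη
    fun p hp => (hu.le_of_incoming hM hB hN hl2 hm hle hκ hF p hp).trans <| by
      simp only [barrier]
      linarith [(hu.cumEnergy_div_mem_Icc hN hl2 hp.1).1]
  linarith

end IsMilneSubsolution

end Estimates

section TwoSided

variable {L M N κ c : ℝ} {F : ℝ → ℝ → ℝ} {u : ℝ × ℝ × ℝ → ℝ}

lemma l2Norm_neg : l2Norm L (fun p => -u p) = l2Norm L u := by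
  simp only [l2Norm, neg_sq]

-- Near the inflow boundary `u` stays close to its data, which lies within `M` of `-c`. So a large
-- `|c|` would force a large `L²` norm.
lemma abs_const_le_of_subsolutions (hu : IsMilneSubsolution L M (M - c) F u)
    (hneg : IsMilneSubsolution L M (M + c) F fun p => -u p) (hL : 1 / 16 ≤ L) (hM : 0 ≤ M)
    (hN : 0 < N) (hl2 : l2Norm L u ≤ N) : |c| ≤ 8 * N + 2 * M := by
  have hupper := hu.neg_inflow_le hL hM hN hl2
  have hlower := hneg.neg_inflow_le hL hM hN (l2Norm_neg.trans_le hl2)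
  exact abs_le.mpr ⟨by linarith, by linarith⟩

theorem abs_le_of_subsolutions (hu : IsMilneSubsolution L M (M - c) F u)
    (hneg : IsMilneSubsolution L M (M + c) F fun p => -u p) (hL : 1 / 16 ≤ L) (hM : 0 ≤ M)
    (hN : 0 < N) (hl2 : l2Norm L u ≤ N) (hκ : 0 ≤ κ) (hκ' : κ ≤ 1 / 24)
    (hF : ∀ p ∈ milneDomain L, -κ ≤ F p.1 p.2.2) :
    ∀ p ∈ milneDomain L, |u p| ≤ 80 * (M + N) := by
  intro q hq
  have hc := abs_const_le_of_subsolutions hu hneg hL hM hN hl2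
  have hB : 0 ≤ M + |c| := by positivity
  obtain ⟨p, hp, hmax⟩ := isCompact_milneDomain.exists_isMaxOn ⟨q, hq⟩ hu.continuousOn.abs
  have hu' : IsMilneSubsolution L M (M + |c|) F u :=
    { hu with inflow_le := fun q hq => (hu.inflow_le q hq).trans (by linarith [neg_abs_le c]) }
  have hneg' : IsMilneSubsolution L M (M + |c|) F fun p => -u p :=
    { hneg with inflow_le := fun q hq => (hneg.inflow_le q hq).trans (by linarith [le_abs_self c]) }
  have hupper := hu'.le_of_le hM hB hN hl2 (abs_nonneg (u p))
    (fun x hx => (le_abs_self _).trans (hmax hx)) hκ hF p hp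
  have hlower := hneg'.le_of_le hM hB hN (l2Norm_neg.trans_le hl2) (abs_nonneg (u p))
    (fun x hx => (neg_le_abs _).trans (hmax hx)) hκ hF p hp
  have habs : |u p| ≤ M + |c| + 2 * M + 2 * N + (3 / 4 + 3 * κ) * |u p| :=
    abs_le'.mpr ⟨hupper, hlower⟩
  have hcontract := mul_le_mul_of_nonneg_right hκ' (abs_nonneg (u p))
  have hq := hmax hq
  simp only [mem_ofPred_eq] at hq
  linarith

end TwoSided

section ClassicalSolutions

variable {L R₁ R₂ ε n r M : ℝ} {F : ℝ → ℝ → ℝ} {h : ℝ → ℝ → ℝ} {S f : ℝ × ℝ × ℝ → ℝ}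
  {p : ℝ × ℝ × ℝ}

lemma milneOperator_eq_of_mem_interior (hp : p ∈ interior (milneDomain L))
    (hf : DifferentiableOn ℝ f (milneDomain L)) : milneOperator L F f p =
      sin p.2.1 * dEta f p + F p.1 p.2.2 * cos p.2.1 * dPhi f p + f p - angAvg f p.1 := by
  have hnhds := mem_interior_iff_mem_nhds.mp hp
  have hderiv : HasFDerivAt f (fderiv ℝ f p) p := (hf.differentiableAt hnhds).hasFDerivAt
  have hη : dEta f p = fderiv ℝ f p (1, 0, 0) := by
    have hline := (hasDerivAt_id p.1).prodMk (hasDerivAt_const p.1 p.2)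
    exact (hderiv.comp_hasDerivAt p.1 hline).deriv
  have hφ : dPhi f p = fderiv ℝ f p (0, 1, 0) := by
    have hline := (hasDerivAt_const p.2.1 p.1).prodMk
      ((hasDerivAt_id p.2.1).prodMk (hasDerivAt_const p.2.1 p.2.2))
    exact (hderiv.comp_hasDerivAt p.2.1 hline).deriv
  have hV : charVelocity F p =
      sin p.2.1 • ((1 : ℝ), (0 : ℝ), (0 : ℝ)) + (F p.1 p.2.2 * cos p.2.1) • (0, 1, 0) := by
    simp [charVelocity]
  rw [milneOperator, fderivWithin_of_mem_nhds hnhds, hV, map_add, map_smul, map_smul, hη, hφ,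
    smul_eq_mul, smul_eq_mul]

lemma milneOperator_sub_const (c : ℝ) (hf : ContinuousOn f (milneDomain L))
    (hp : p ∈ milneDomain L) :
    milneOperator L F (fun p => f p - c) p = milneOperator L F f p := by
  have havg : angAvg (fun p => f p - c) p.1 = angAvg f p.1 - c := by
    simpa only [sub_eq_add_neg, angAvg_const] using
      angAvg_add (k := fun _ => -c) hf continuousOn_const hp.1
  rw [milneOperator, milneOperator, fderivWithin_sub_const, havg]
  ring

lemma continuousOn_milneOperator (hL : 0 < L) (hf : ContDiffOn ℝ 1 f (milneDomain L))
    (hF : ContinuousOn (fun p : ℝ × ℝ × ℝ => F p.1 p.2.2) (milneDomain L)) :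
    ContinuousOn (milneOperator L F f) (milneDomain L) := by
  have hV : ContinuousOn (charVelocity F) (milneDomain L) :=
    ContinuousOn.prodMk (by fun_prop) ((hF.mul (by fun_prop)).prodMk continuousOn_const)
  have havg : ContinuousOn (fun p : ℝ × ℝ × ℝ => angAvg f p.1) (milneDomain L) :=
    (continuousOn_angAvg hf.continuousOn).comp continuousOn_fst fun p hp => hp.1
  exact (((hf.continuousOn_fderivWithin (uniqueDiffOn_milneDomain hL) le_rfl).clm_apply hV).add
    hf.continuousOn).sub havg

lemma force_mem_Icc {η ψ : ℝ} (hr : 0 < r) (hε : 0 ≤ ε) (h₁ : r ≤ R₁ - ε * η)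
    (h₂ : r ≤ R₂ - ε * η) : force R₁ R₂ ε η ψ ∈ Icc (-(ε / r)) 0 := by
  have hsum : sin ψ ^ 2 / (R₁ - ε * η) + cos ψ ^ 2 / (R₂ - ε * η) ≤ 1 / r :=
    calc _ ≤ sin ψ ^ 2 / r + cos ψ ^ 2 / r := by gcongr
      _ = 1 / r := by rw [← add_div, sin_sq_add_cos_sq]
  have hsum₀ : 0 ≤ sin ψ ^ 2 / (R₁ - ε * η) + cos ψ ^ 2 / (R₂ - ε * η) :=
    add_nonneg (div_nonneg (sq_nonneg _) (hr.le.trans h₁))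
      (div_nonneg (sq_nonneg _) (hr.le.trans h₂))
  constructor
  · calc -(ε / r) = -ε * (1 / r) := by ring
      _ ≤ force R₁ R₂ ε η ψ := mul_le_mul_of_nonpos_left hsum (neg_nonpos.mpr hε)
  · exact mul_nonpos_of_nonpos_of_nonneg (neg_nonpos.mpr hε) hsum₀

lemma continuousOn_force (hr : 0 < r) (h₁ : ∀ η ∈ Icc 0 L, r ≤ R₁ - ε * η)
    (h₂ : ∀ η ∈ Icc 0 L, r ≤ R₂ - ε * η) :
    ContinuousOn (fun p : ℝ × ℝ × ℝ => force R₁ R₂ ε p.1 p.2.2) (milneDomain L) :=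
  continuousOn_const.mul <|
    (ContinuousOn.div (by fun_prop) (by fun_prop) fun p hp => (hr.trans_le (h₁ p.1 hp.1)).ne').add
      (ContinuousOn.div (by fun_prop) (by fun_prop) fun p hp => (hr.trans_le (h₂ p.1 hp.1)).ne')

namespace IsMilneSolution

lemma neg (hf : IsMilneSolution R₁ R₂ ε n h S f) :
    IsMilneSolution R₁ R₂ ε n (fun φ ψ => -h φ ψ) (fun p => -S p) (fun p => -f p) where
  smooth := hf.smooth.neg
  eqn p hp := by
    simp only [← hf.eqn p hp, dEta, dPhi, angAvg_neg, deriv.fun_neg]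
    ring
  inflow q hq := congrArg Neg.neg (hf.inflow q hq)
  reflect φ ψ := congrArg Neg.neg (hf.reflect φ ψ)

lemma isMilneSubsolution_sub_const (hf : IsMilneSolution R₁ R₂ ε n h S f) (c : ℝ)
    (hL : 0 < layerL ε n) (hr : 0 < r) (hε : 0 ≤ ε)
    (h₁ : ∀ η ∈ Icc 0 (layerL ε n), r ≤ R₁ - ε * η) (h₂ : ∀ η ∈ Icc 0 (layerL ε n), r ≤ R₂ - ε * η)
    (hh : ∀ q ∈ inflowSet, h q.1 q.2 ≤ M)
    (hS : ∀ p ∈ interior (milneDomain (layerL ε n)), S p ≤ M) :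
    IsMilneSubsolution (layerL ε n) M (M - c) (force R₁ R₂ ε) fun p => f p - c where
  differentiableOn := (hf.smooth.differentiableOn one_ne_zero).sub_const c
  force_nonpos p hp := (force_mem_Icc hr hε (h₁ p.1 hp.1) (h₂ p.1 hp.1)).2
  milneOperator_le p hp := by
    rw [milneOperator_sub_const c hf.smooth.continuousOn hp]
    have hclosure := closure_interior_milneDomain hL
    have hcont := continuousOn_milneOperator hL hf.smooth (continuousOn_force hr h₁ h₂)
    refine le_on_closure (fun p hp => ?_) (hclosure.symm ▸ hcont) continuousOn_const
      (hclosure.symm ▸ hp)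
    rw [milneOperator_eq_of_mem_interior hp (hf.smooth.differentiableOn one_ne_zero), hf.eqn p hp]
    exact hS p hp
  inflow_le q hq := by linarith [hf.inflow q hq, hh q hq]
  reflect φ ψ := congrArg (· - c) (hf.reflect φ ψ)

end IsMilneSolution

end ClassicalSolutions

section SmallEps

variable {ε n δ : ℝ}

lemma one_le_layerL (hε : ε ∈ Ioc 0 1) (hn : 0 ≤ n) : 1 ≤ layerL ε n :=
  one_le_rpow_of_pos_of_le_one_of_nonpos hε.1 hε.2 (neg_nonpos.mpr hn)

lemma mul_layerL (hε : 0 < ε) : ε * layerL ε n = ε ^ (1 - n) := by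
  rw [layerL, sub_eq_add_neg, rpow_add hε, rpow_one]

lemma exists_mul_layerL_le (hn : n < 1) (hδ : 0 < δ) :
    ∃ ε₀ ∈ Ioo (0 : ℝ) 1, ∀ ε ∈ Ioc 0 ε₀, ε * layerL ε n ≤ δ := by
  have hpow : 0 < δ ^ (1 - n)⁻¹ := rpow_pos_of_pos hδ _
  refine ⟨min (1 / 2) (δ ^ (1 - n)⁻¹), ⟨lt_min (by norm_num) hpow,
    (min_le_left _ _).trans_lt (by norm_num)⟩, fun ε hε => ?_⟩
  calc ε * layerL ε n = ε ^ (1 - n) := mul_layerL hε.1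
    _ ≤ (δ ^ (1 - n)⁻¹) ^ (1 - n) :=
        rpow_le_rpow hε.1.le (hε.2.trans (min_le_right _ _)) (sub_pos.mpr hn).le
    _ = δ := rpow_inv_rpow hδ.le (sub_pos.mpr hn).ne'

end SmallEps

section MainEstimate

variable {R₁ R₂ ε n M N : ℝ} {h : ℝ → ℝ → ℝ} {S f : ℝ × ℝ × ℝ → ℝ}

theorem IsMilneSolution.abs_sub_const_le (hf : IsMilneSolution R₁ R₂ ε n h S f) (c : ℝ) (hε : 0 < ε)
    (hL : 1 ≤ layerL ε n) (hsmall : ε * layerL ε n ≤ min R₁ R₂ / 48) (hM : 0 ≤ M)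
    (hh : ∀ q ∈ inflowSet, |h q.1 q.2| ≤ M)
    (hS : ∀ p ∈ interior (milneDomain (layerL ε n)), |S p| ≤ M) (hN : 0 < N)
    (hl2 : l2Norm (layerL ε n) (fun p => f p - c) ≤ N) :
    ∀ p ∈ milneDomain (layerL ε n), |f p - c| ≤ 80 * (M + N) := by
  have hεL : ε ≤ ε * layerL ε n := le_mul_of_one_le_right hε.le hL
  have hr : 0 < min R₁ R₂ / 2 := by linarith
  have hgap : ∀ η ∈ Icc 0 (layerL ε n), min R₁ R₂ / 2 ≤ min R₁ R₂ - ε * η := fun η hη => by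
    linarith [mul_le_mul_of_nonneg_left hη.2 hε.le]
  have h₁ : ∀ η ∈ Icc 0 (layerL ε n), min R₁ R₂ / 2 ≤ R₁ - ε * η := fun η hη =>
    (hgap η hη).trans (sub_le_sub_right (min_le_left _ _) _)
  have h₂ : ∀ η ∈ Icc 0 (layerL ε n), min R₁ R₂ / 2 ≤ R₂ - ε * η := fun η hη =>
    (hgap η hη).trans (sub_le_sub_right (min_le_right _ _) _)
  have hupper := hf.isMilneSubsolution_sub_const c (by linarith) hr hε.le h₁ h₂
    (fun q hq => (le_abs_self _).trans (hh q hq)) fun p hp => (le_abs_self _).trans (hS p hp)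
  have hlower := hf.neg.isMilneSubsolution_sub_const (-c) (by linarith) hr hε.le h₁ h₂
    (fun q hq => (neg_le_abs _).trans (hh q hq)) fun p hp => (neg_le_abs _).trans (hS p hp)
  refine abs_le_of_subsolutions (κ := ε / (min R₁ R₂ / 2)) hupper ?_ (by linarith) hM hN hl2
    (by positivity) ?_ fun p hp => (force_mem_Icc hr hε.le (h₁ p.1 hp.1) (h₂ p.1 hp.1)).1
  · simpa only [sub_neg_eq_add, neg_sub', neg_add_eq_sub] using hlower
  · rw [div_le_iff₀ hr]
    linarith

theorem milne_Linf_estimate_general (hR₁ : 0 < R₁) (hR₂ : 0 < R₂) (hn : n ∈ Ico 0 1) :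
    ∃ ε₀ ∈ Ioo (0 : ℝ) 1, ∀ ε ∈ Ioc 0 ε₀, ∀ (h : ℝ → ℝ → ℝ) (S f : ℝ × ℝ × ℝ → ℝ) (M c : ℝ),
      (∀ q ∈ inflowSet, |h q.1 q.2| ≤ M) →
      (∀ p ∈ interior (milneDomain (layerL ε n)), |S p| ≤ M) →
      IsMilneSolution R₁ R₂ ε n h S f →
      linfNorm (layerL ε n) (fun p => f p - c)
        ≤ 80 * (M + l2Norm (layerL ε n) (fun p => f p - c)) := by
  obtain ⟨ε₀, hε₀, hsmall⟩ := exists_mul_layerL_le hn.2 (by positivity : 0 < min R₁ R₂ / 48)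
  refine ⟨ε₀, hε₀, fun ε hε h S f M c hh hS hf => ?_⟩
  have hL := one_le_layerL ⟨hε.1, hε.2.trans hε₀.2.le⟩ hn.1
  have hM : 0 ≤ M := by
    obtain ⟨p, hp⟩ := nonempty_interior_milneDomain (zero_lt_one.trans_le hL)
    exact (abs_nonneg _).trans (hS p hp)
  have hl2 : 0 ≤ l2Norm (layerL ε n) fun p => f p - c := sqrt_nonneg _
  refine linfNorm_le (by positivity) fun p hp => le_of_forall_pos_le_add fun δ hδ => ?_
  have hle := hf.abs_sub_const_le c hε.1 hL (hsmall ε hε) hM hh hS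
    (by positivity : 0 < l2Norm (layerL ε n) (fun p => f p - c) + δ / 80) (by linarith) p hp
  linarith

end MainEstimate

namespace DataBounds

variable {K M L : ℝ} {h : ℝ → ℝ → ℝ} {S : ℝ × ℝ × ℝ → ℝ}

lemma abs_inflow_le_s1 (hdata : DataBounds K M L h S) : ∀ q ∈ inflowSet, |h q.1 q.2| ≤ M :=
  fun q hq => by
    linarith [hdata.hBound q hq, abs_nonneg (deriv (fun t => h t q.2) q.1),
      abs_nonneg (deriv (fun t => h q.1 t) q.2)]

lemma abs_source_le (hdata : DataBounds K M L h S) (hK : 0 ≤ K) :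
    ∀ p ∈ milneDomain L, |S p| ≤ M := fun p hp =>
  calc |S p| ≤ |S p| + |dEta S p| + |dPhi S p| + |dPsi S p| := by
        linarith [abs_nonneg (dEta S p), abs_nonneg (dPhi S p), abs_nonneg (dPsi S p)]
    _ ≤ exp (K * p.1) * (|S p| + |dEta S p| + |dPhi S p| + |dPsi S p|) :=
        le_mul_of_one_le_left (by positivity) (one_le_exp (mul_nonneg hK hp.1.1))
    _ ≤ M := hdata.sBound p hp

end DataBounds

/-- Theorem "Milne LI Theorem": `L^∞` bound via the `L²` bound. -/
theorem milne_Linf_estimate (R₁ R₂ n K M : ℝ) (hR₁ : 0 < R₁) (hR₂ : 0 < R₂)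
    (hn : n ∈ Ioo (0 : ℝ) (1 / 2)) (hK : 0 < K) (hM : 0 < M) :
    ∃ ε₀ ∈ Ioo (0 : ℝ) 1, ∃ C > (0 : ℝ),
      ∀ ε ∈ Ioc (0 : ℝ) ε₀, ∀ h : ℝ → ℝ → ℝ, ∀ S f : ℝ × ℝ × ℝ → ℝ,
        DataBounds K M (layerL ε n) h S → IsMilneSolution R₁ R₂ ε n h S f →
        linfNorm (layerL ε n) (fun p => f p - limitValue (layerL ε n) f)
          ≤ C * (1 + l2Norm (layerL ε n) (fun p => f p - limitValue (layerL ε n) f)) := by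
  obtain ⟨ε₀, hε₀, hbound⟩ :=
    milne_Linf_estimate_general hR₁ hR₂ ⟨hn.1.le, hn.2.trans (by norm_num)⟩
  refine ⟨ε₀, hε₀, 80 * (1 + M), by positivity, fun ε hε h S f hdata hf => ?_⟩
  refine (hbound ε hε h S f M _ hdata.abs_inflow_le_s1
    (fun p hp => hdata.abs_source_le hK.le p (interior_subset hp)) hf).trans ?_
  have hl2 : 0 ≤ l2Norm (layerL ε n) (fun p => f p - limitValue (layerL ε n) f) := sqrt_nonneg _
  nlinarith [mul_nonneg hM.le hl2]

end MilneStmt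
end
end
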